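/- arXiv:0805.2104 — 2 statements merged into one kernel-verified Lean document; each statement's English description precedes it below -/
import Mathlib

section
/- Suppose there exists ρ > 0 such that every characteristic zero λ satisfies Re λ ≤ −ρ. Let x be a solution of the perturbed equation with ‖F(t)‖ ≤ γ(t)·‖x_t‖ for all t ≥ 0, where γ : [0,∞) → [0,∞) is continuous and there exists a > 0 with e^{a t} γ(t) → 0 as t → ∞. Then x converges to zero exponentially: there exist M > 0 and c > 0 such that ‖x(t)‖ ≤ M e^{−c t} for all t ≥ 0. -/
open Filter MeasureTheory

/-- Multiplication of a vector of `EuclideanSpace ℂ (Fin n)` by a matrix. -/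
noncomputable def mulVecE {n : ℕ} (A : Matrix (Fin n) (Fin n) ℂ)
    (v : EuclideanSpace ℂ (Fin n)) : EuclideanSpace ℂ (Fin n) :=
  Matrix.toEuclideanLin A v

/-- `‖x_t‖ = sup_{τ ∈ [t-H, t]} ‖x τ‖`. -/
noncomputable def slidingSup {n : ℕ} (H : ℝ) (x : ℝ → EuclideanSpace ℂ (Fin n)) (t : ℝ) : ℝ :=
  sSup ((fun τ => ‖x τ‖) '' Set.Icc (t - H) t)

/-- Characteristic function `Δ(s) = det (s I - Σ_i A_i e^{-h_i s})` of the linear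
delay equation `y'(t) = Σ_i A_i y(t - h_i)`. -/
noncomputable def charFn {n m : ℕ} (A : Fin (m + 1) → Matrix (Fin n) (Fin n) ℂ)
    (hd : Fin (m + 1) → ℝ) (s : ℂ) : ℂ :=
  Matrix.det (s • (1 : Matrix (Fin n) (Fin n) ℂ) - ∑ i, Complex.exp (-(hd i : ℂ) * s) • A i)

/-!
Write `Du` for the defect `u' t - ∑ i, L i (u (t - h i))`. On a vertical line `Re s = β ≥ 0`
the characteristic operator is invertible with inverse bounded by a constant `C` independent of
`β`, so Plancherel's theorem gives `‖exp (-β t) u‖₂ ≤ C ‖exp (-β t) Du‖₂` for every `u` whose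
weighted norms are finite. Multiplication by a weight `θ` of small relative variation commutes
with `D` up to a small relative error, which is absorbed into the left side. With the bounded
weights `θ = (exp (-δ t) + ε)⁻¹`, which increase to `exp (δ t)` as `ε → 0`, this pushes the `L²`
estimate beyond the growth rate known a priori: a solution which is `O(exp (b t))`, `b ≥ 0`, with
forcing `O(exp ((b - a) t))` is `O(exp ((b - δ / 2) t))`, and `δ` does not depend on `b`.
The forcing is smaller than the solution by a factor `exp (-a t)` and a Gronwall argument provides
some initial rate `b`, so finitely many repetitions make the rate negative.
-/

open FourierTransform SchwartzMap Topology Set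
open scoped ContDiff

section Plancherel

variable {V E : Type*} [NormedAddCommGroup V] [InnerProductSpace ℝ V] [FiniteDimensional ℝ V]
  [MeasurableSpace V] [BorelSpace V] [NormedAddCommGroup E] [InnerProductSpace ℂ E]
  [CompleteSpace E]

theorem coeFn_fourier_toLp {f : V → E} (hf₁ : Integrable f) (hf₂ : MemLp f 2) :
    ((𝓕 (hf₂.toLp f) : Lp E 2 (volume : Measure V)) : V → E) =ᵐ[volume] 𝓕 f := by
  have hcont : Continuous (𝓕 f) :=
    VectorFourier.fourierIntegral_continuous Real.continuous_fourierChar continuous_inner hf₁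
  refine ae_eq_of_integral_contDiff_smul_eq ((Lp.memLp _).locallyIntegrable one_le_two)
    hcont.locallyIntegrable fun g hg hgc => ?_
  have hGc : HasCompactSupport (Complex.ofRealCLM ∘ g) := hgc.comp_left rfl
  have hGs : ContDiff ℝ ∞ (Complex.ofRealCLM ∘ g) := Complex.ofRealCLM.contDiff.comp hg
  set G : 𝓢(V, ℂ) := hGc.toSchwartzMap hGs
  have hGg : ∀ (t : V) (w : E), G t • w = g t • w := fun t w => Complex.coe_smul (g t) w
  calc ∫ t, g t • (𝓕 (hf₂.toLp f) : Lp E 2 (volume : Measure V)) t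
      = Lp.toTemperedDistribution (𝓕 (hf₂.toLp f)) G := by
        simp only [Lp.toTemperedDistribution_apply, hGg]
    _ = ∫ t, (𝓕 G) t • hf₂.toLp f t := by
        rw [← Lp.fourier_toTemperedDistribution_eq, TemperedDistribution.fourier_apply,
          Lp.toTemperedDistribution_apply]
    _ = ∫ t, 𝓕 (G : V → ℂ) t • f t := by
        refine integral_congr_ae ?_
        filter_upwards [hf₂.coeFn_toLp] with t ht
        rw [ht, SchwartzMap.fourier_coe]
    _ = ∫ t, G t • 𝓕 f t := by
        have := VectorFourier.integral_fourierIntegral_smul_eq_flip (μ := (volume : Measure V))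
          (ν := (volume : Measure V)) (L := innerₗ V)
          Real.continuous_fourierChar continuous_inner G.integrable hf₁
        rwa [flip_innerₗ] at this
    _ = ∫ t, g t • 𝓕 f t := by simp only [hGg]

theorem eLpNorm_fourier_two {f : V → E} (hf₁ : Integrable f) (hf₂ : MemLp f 2) :
    eLpNorm (𝓕 f) 2 = eLpNorm f 2 := by
  rw [← eLpNorm_congr_ae (coeFn_fourier_toLp hf₁ hf₂), ← eLpNorm_congr_ae hf₂.coeFn_toLp,
    ← Lp.enorm_def, ← Lp.enorm_def, ← ofReal_norm, Lp.norm_fourier_eq, ofReal_norm]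

end Plancherel

section Laplace

variable {E : Type*} [NormedAddCommGroup E] [NormedSpace ℂ E]

/-- The function `e^{-β t} u(t)`: membership of `expWeight β u` in `L^p` says that `u` lies in the
`L^p` space with exponential weight of rate `β`. -/
noncomputable def expWeight (β : ℝ) (u : ℝ → E) (t : ℝ) : E := Real.exp (-β * t) • u t

/-- The bilateral Laplace transform. -/
noncomputable def laplace (u : ℝ → E) (s : ℂ) : E := ∫ t : ℝ, Complex.exp (-s * t) • u t

theorem norm_expWeight (β : ℝ) (u : ℝ → E) (t : ℝ) :
    ‖expWeight β u t‖ = Real.exp (-β * t) * ‖u t‖ := by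
  rw [expWeight, norm_smul, Real.norm_of_nonneg (Real.exp_pos _).le]

theorem fourier_expWeight (β : ℝ) (u : ℝ → E) (ξ : ℝ) :
    𝓕 (expWeight β u) ξ = laplace u (β + 2 * Real.pi * ξ * Complex.I) := by
  rw [Real.fourier_real_eq_integral_exp_smul, laplace]
  congr 1 with t
  rw [expWeight, ← Complex.coe_smul, smul_smul, Complex.ofReal_exp, ← Complex.exp_add]
  congr 2
  push_cast
  ring

theorem integrable_cexp_smul {u : ℝ → E} {s : ℂ} (hu : Integrable (expWeight s.re u)) :
    Integrable fun t : ℝ => Complex.exp (-s * t) • u t := by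
  have hphase : ∀ t : ℝ, Complex.exp (-s * t) • u t =
      Complex.exp (-(s.im * t : ℝ) * Complex.I) • expWeight s.re u t := by
    intro t
    rw [expWeight, ← Complex.coe_smul, smul_smul, Complex.ofReal_exp, ← Complex.exp_add]
    congr 2
    nth_rewrite 1 [← Complex.re_add_im s]
    push_cast
    ring
  simp only [hphase]
  refine hu.mono ?_ (.of_forall fun t => ?_)
  · exact (by fun_prop : Continuous fun t : ℝ =>
      Complex.exp (-(s.im * t : ℝ) * Complex.I)).aestronglyMeasurable.smul hu.1
  · rw [norm_smul, ← Complex.ofReal_neg, Complex.norm_exp_ofReal_mul_I, one_mul]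

end Laplace

section LaplaceDelay

variable {E : Type*} [NormedAddCommGroup E] [NormedSpace ℂ E]

theorem expWeight_comp_sub_right (β h : ℝ) (u : ℝ → E) :
    expWeight β (fun t => u (t - h)) = fun t => Real.exp (-β * h) • expWeight β u (t - h) := by
  ext t
  rw [expWeight, expWeight, smul_smul, ← Real.exp_add]
  ring_nf

theorem expWeight_clm (L : E →L[ℂ] E) (β : ℝ) (u : ℝ → E) :
    expWeight β (fun t => L (u t)) = fun t => L (expWeight β u t) := by
  ext t
  exact (L.map_smul_of_tower _ _).symm

theorem memLp_expWeight_clm_comp_sub_right (L : E →L[ℂ] E) (h : ℝ) {β : ℝ} {u : ℝ → E}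
    {p : ENNReal} (hu : MemLp (expWeight β u) p) :
    MemLp (expWeight β fun t => L (u (t - h))) p := by
  rw [expWeight_clm L β fun t => u (t - h), expWeight_comp_sub_right]
  exact L.comp_memLp'
    ((hu.comp_measurePreserving (measurePreserving_sub_right volume h)).const_smul _)

theorem laplace_deriv [CompleteSpace E] {u : ℝ → E} {s : ℂ} (hd : Differentiable ℝ u)
    (hu : Integrable (expWeight s.re u)) (hu' : Integrable (expWeight s.re (deriv u))) :
    laplace (deriv u) s = s • laplace u s := by
  have hderiv : ∀ t : ℝ, HasDerivAt (fun t : ℝ => Complex.exp (-s * t) • u t)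
      (Complex.exp (-s * t) • deriv u t - s • Complex.exp (-s * t) • u t) t := by
    intro t
    have hexp : HasDerivAt (fun t : ℝ => Complex.exp (-s * t)) (Complex.exp (-s * t) * -s) t := by
      simpa using ((Complex.ofRealCLM.hasDerivAt (x := t)).const_mul (-s)).cexp
    refine (hexp.smul (hd t).hasDerivAt).congr_deriv ?_
    rw [smul_smul, mul_neg, neg_smul, mul_comm s, sub_eq_add_neg]
  have hint := integrable_cexp_smul hu
  have hint' := integrable_cexp_smul hu'
  rw [← sub_eq_zero, laplace, laplace, ← integral_smul, ← integral_sub hint' (hint.fun_smul s)]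
  exact integral_eq_zero_of_hasDerivAt_of_integrable hderiv (hint'.sub (hint.fun_smul s)) hint

theorem laplace_clm_comp_sub_right [CompleteSpace E] (L : E →L[ℂ] E) (h : ℝ) {u : ℝ → E} {s : ℂ}
    (hu : Integrable (expWeight s.re u)) :
    laplace (fun t => L (u (t - h))) s = Complex.exp (-h * s) • L (laplace u s) := by
  calc laplace (fun t => L (u (t - h))) s
      = ∫ t : ℝ, Complex.exp (-h * s) • L (Complex.exp (-s * ↑(t - h)) • u (t - h)) := by
        refine integral_congr_ae (.of_forall fun t => ?_)
        simp only [map_smul, smul_smul, ← Complex.exp_add]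
        congr 2
        push_cast
        ring
    _ = Complex.exp (-h * s) • ∫ t : ℝ, L (Complex.exp (-s * t) • u t) := by
        rw [integral_smul, integral_sub_right_eq_self fun t : ℝ => L (Complex.exp (-s * t) • u t)]
    _ = Complex.exp (-h * s) • L (laplace u s) := by
        rw [L.integral_comp_comm (integrable_cexp_smul hu), laplace]

end LaplaceDelay

section DelayOperator

variable {ι E : Type*} [Fintype ι] [NormedAddCommGroup E]

/-- The characteristic operator `s - ∑ i, exp (-h i * s) L i` of the delay equation
`u' t = ∑ i, L i (u (t - h i))`. In finite dimension its determinant is the characteristic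
function. -/
noncomputable def charOp [NormedSpace ℂ E] (L : ι → E →L[ℂ] E) (h : ι → ℝ) (s : ℂ) : E →L[ℂ] E :=
  s • 1 - ∑ i, Complex.exp (-(h i : ℂ) * s) • L i

/-- The defect `u' t - ∑ i, L i (u (t - h i))` of `u` in the delay equation, that is, the forcing
term which `u` solves it for. -/
noncomputable def delayResidual [NormedSpace ℂ E] (L : ι → E →L[ℂ] E) (h : ι → ℝ) (u : ℝ → E)
    (t : ℝ) : E :=
  deriv u t - ∑ i, L i (u (t - h i))

section Laplace

variable [NormedSpace ℂ E] (L : ι → E →L[ℂ] E) (h : ι → ℝ) {u : ℝ → E}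

theorem memLp_expWeight_delayResidual {β : ℝ} {p : ENNReal} (hu : MemLp (expWeight β u) p)
    (hu' : MemLp (expWeight β (deriv u)) p) : MemLp (expWeight β (delayResidual L h u)) p := by
  have hsum := hu'.sub (memLp_finsetSum Finset.univ fun i _ =>
    memLp_expWeight_clm_comp_sub_right (L i) (h i) hu)
  refine hsum.ae_eq (.of_forall fun t => ?_)
  simp [expWeight, delayResidual, smul_sub, Finset.smul_sum]

theorem laplace_delayResidual [CompleteSpace E] {s : ℂ} (hd : Differentiable ℝ u)
    (hu : Integrable (expWeight s.re u)) (hu' : Integrable (expWeight s.re (deriv u))) :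
    laplace (delayResidual L h u) s = charOp L h s (laplace u s) := by
  have hterm : ∀ i, Integrable fun t : ℝ => Complex.exp (-s * t) • L i (u (t - h i)) :=
    fun i => integrable_cexp_smul <| memLp_one_iff_integrable.1 <|
      memLp_expWeight_clm_comp_sub_right (L i) (h i) (memLp_one_iff_integrable.2 hu)
  calc laplace (delayResidual L h u) s
      = ∫ t : ℝ, (Complex.exp (-s * t) • deriv u t
          - ∑ i, Complex.exp (-s * t) • L i (u (t - h i))) := by
        simp only [laplace, delayResidual, smul_sub, Finset.smul_sum]
    _ = laplace (deriv u) s - ∑ i, laplace (fun t => L i (u (t - h i))) s := by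
        rw [integral_sub (integrable_cexp_smul hu') (integrable_finsetSum _ fun i _ => hterm i),
          integral_finsetSum _ fun i _ => hterm i]
        rfl
    _ = charOp L h s (laplace u s) := by
        simp only [laplace_deriv hd hu hu', laplace_clm_comp_sub_right _ _ hu, charOp]
        simp

end Laplace

variable [InnerProductSpace ℂ E] [CompleteSpace E] {L : ι → E →L[ℂ] E} {h : ι → ℝ} {u : ℝ → E}

theorem eLpNorm_expWeight_le_mul_eLpNorm_delayResidual {C β : ℝ}
    (hC : ∀ s : ℂ, s.re = β → ∀ w, ‖w‖ ≤ C * ‖charOp L h s w‖) (hd : Differentiable ℝ u)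
    (hu : ∀ p ∈ ({1, 2} : Set ENNReal), MemLp (expWeight β u) p)
    (hu' : ∀ p ∈ ({1, 2} : Set ENNReal), MemLp (expWeight β (deriv u)) p) :
    eLpNorm (expWeight β u) 2
      ≤ ENNReal.ofReal C * eLpNorm (expWeight β (delayResidual L h u)) 2 := by
  have hu₁ := memLp_one_iff_integrable.1 (hu 1 (by simp))
  have hu₁' := memLp_one_iff_integrable.1 (hu' 1 (by simp))
  have hDu := fun p hp => memLp_expWeight_delayResidual L h (hu p hp) (hu' p hp)
  rw [← eLpNorm_fourier_two hu₁ (hu 2 (by simp)),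
    ← eLpNorm_fourier_two (memLp_one_iff_integrable.1 (hDu 1 (by simp))) (hDu 2 (by simp))]
  refine eLpNorm_le_mul_eLpNorm_of_ae_le_mul (.of_forall fun ξ => ?_) 2
  have hre : (β + 2 * Real.pi * ξ * Complex.I : ℂ).re = β := by simp
  rw [fourier_expWeight, fourier_expWeight,
    laplace_delayResidual L h hd (by rwa [hre]) (by rwa [hre])]
  exact hC _ hre _

end DelayOperator

section Resolvent

variable {ι E : Type*} [Fintype ι] [NormedAddCommGroup E] [NormedSpace ℂ E]
  (L : ι → E →L[ℂ] E) {h : ι → ℝ}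

theorem norm_exp_neg_mul_le_one {r : ℝ} {s : ℂ} (hr : 0 ≤ r) (hs : 0 ≤ s.re) :
    ‖Complex.exp (-(r : ℂ) * s)‖ ≤ 1 := by
  rw [Complex.norm_exp, Real.exp_le_one_iff]
  simpa using mul_nonneg hr hs

theorem norm_le_norm_charOp_of_large (hh : ∀ i, 0 ≤ h i) {s : ℂ} (hs : 0 ≤ s.re)
    (hlarge : ∑ i, ‖L i‖ + 1 ≤ ‖s‖) (w : E) : ‖w‖ ≤ ‖charOp L h s w‖ := by
  have hdelay : ‖∑ i, Complex.exp (-(h i : ℂ) * s) • L i w‖ ≤ (∑ i, ‖L i‖) * ‖w‖ := by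
    rw [Finset.sum_mul]
    refine norm_sum_le_of_le _ fun i _ => ?_
    rw [norm_smul]
    exact (mul_le_of_le_one_left (norm_nonneg _) (norm_exp_neg_mul_le_one (hh i) hs)).trans
      ((L i).le_opNorm w)
  calc ‖w‖ ≤ ‖s‖ * ‖w‖ - (∑ i, ‖L i‖) * ‖w‖ := by nlinarith [norm_nonneg w]
    _ ≤ ‖s • w‖ - ‖∑ i, Complex.exp (-(h i : ℂ) * s) • L i w‖ := by
        rw [norm_smul]
        gcongr
    _ ≤ ‖charOp L h s w‖ := by
        simpa [charOp] using norm_sub_norm_le (s • w) (∑ i, Complex.exp (-(h i : ℂ) * s) • L i w)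

theorem continuous_charOp (h : ι → ℝ) : Continuous (charOp L h) := by
  unfold charOp
  fun_prop

theorem norm_le_norm_inverse_mul {T : E →L[ℂ] E} (hT : IsUnit T) (w : E) :
    ‖w‖ ≤ ‖Ring.inverse T‖ * ‖T w‖ := by
  calc ‖w‖ = ‖(Ring.inverse T * T) w‖ := by rw [Ring.inverse_mul_cancel T hT]; rfl
    _ ≤ ‖Ring.inverse T‖ * ‖T w‖ := (Ring.inverse T).le_opNorm (T w)

theorem exists_norm_le_mul_norm_charOp [CompleteSpace E] (hh : ∀ i, 0 ≤ h i)
    (hunit : ∀ s : ℂ, 0 ≤ s.re → IsUnit (charOp L h s)) :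
    ∃ C > 0, ∀ s : ℂ, 0 ≤ s.re → ∀ w, ‖w‖ ≤ C * ‖charOp L h s w‖ := by
  set K : Set ℂ := {s | 0 ≤ s.re} ∩ Metric.closedBall 0 (∑ i, ‖L i‖ + 1)
  have hK : IsCompact K := (isCompact_closedBall _ _).inter_left
    (isClosed_le continuous_const Complex.continuous_re)
  have hcont : ContinuousOn (fun s => Ring.inverse (charOp L h s)) K := by
    intro s hs
    obtain ⟨U, hU⟩ := hunit s hs.1
    have hinv := NormedRing.inverse_continuousAt U
    rw [hU] at hinv
    exact (hinv.comp (continuous_charOp L h).continuousAt).continuousWithinAt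
  obtain ⟨C, hC⟩ := hK.exists_bound_of_continuousOn hcont
  refine ⟨max C 1, by positivity, fun s hs w => ?_⟩
  rcases le_total ‖s‖ (∑ i, ‖L i‖ + 1) with hsmall | hlarge
  · have hsK : s ∈ K := ⟨hs, by simpa using hsmall⟩
    calc ‖w‖ ≤ ‖Ring.inverse (charOp L h s)‖ * ‖charOp L h s w‖ :=
          norm_le_norm_inverse_mul (hunit s hs) w
      _ ≤ max C 1 * ‖charOp L h s w‖ := by
          gcongr
          exact (hC s hsK).trans (le_max_left _ _)
  · calc ‖w‖ ≤ 1 * ‖charOp L h s w‖ := by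
          simpa using norm_le_norm_charOp_of_large L hh hs hlarge w
      _ ≤ max C 1 * ‖charOp L h s w‖ := by
          gcongr
          exact le_max_right _ _

end Resolvent

section ExponentialGrowth

variable {E : Type*} [NormedAddCommGroup E] [NormedSpace ℂ E]

theorem integrable_of_continuous_of_isBigO_exp {φ : ℝ → ℝ} {c : ℝ} (hc : c < 0)
    (hφ : Continuous φ) (hbot : φ =ᶠ[atBot] 0)
    (htop : φ =O[atTop] fun t => Real.exp (c * t)) : Integrable φ := by
  refine hφ.locallyIntegrable.integrable_of_isBigO_atBot_atTop (g := 0)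
    (g' := fun t => Real.exp (c * t)) hbot.isBigO ⟨univ, univ_mem, ?_⟩ htop
    ⟨Ioi 0, Ioi_mem_atTop 0, ?_⟩
  · exact integrableOn_zero
  · simpa using exp_neg_integrableOn_Ioi 0 (neg_pos.2 hc)

theorem isBigO_expWeight {f : ℝ → E} {b : ℝ} {l : Filter ℝ} (β : ℝ)
    (hf : f =O[l] fun t => Real.exp (b * t)) :
    expWeight β f =O[l] fun t => Real.exp ((b - β) * t) := by
  have hmul := (Asymptotics.isBigO_refl (fun t => Real.exp (-β * t)) l).smul hf
  refine hmul.congr_right fun t => ?_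
  rw [smul_eq_mul, ← Real.exp_add]
  ring_nf

theorem memLp_expWeight_of_isBigO {f : ℝ → E} {b β : ℝ} {p : ENNReal} (hp : p ≠ 0) (hp' : p ≠ ⊤)
    (hb : b < β) (hf : Continuous f) (hbot : f =ᶠ[atBot] 0)
    (htop : f =O[atTop] fun t => Real.exp (b * t)) : MemLp (expWeight β f) p := by
  have hcont : Continuous (expWeight β f) := by unfold expWeight; fun_prop
  have hp0 := ENNReal.toReal_pos hp hp'
  rw [← integrable_norm_rpow_iff hcont.aestronglyMeasurable hp hp']
  refine integrable_of_continuous_of_isBigO_exp (c := p.toReal * (b - β)) (by nlinarith)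
    (hcont.norm.rpow_const fun _ => .inr hp0.le) ?_ ?_
  · filter_upwards [hbot] with t ht
    simp [expWeight, ht, hp0.ne']
  · refine ((isBigO_expWeight β htop).norm_left.rpow hp0.le (.of_forall fun t =>
      (Real.exp_pos _).le)).congr_right fun t => ?_
    rw [← Real.exp_mul]
    ring_nf

end ExponentialGrowth

section Growth

variable {ι E : Type*} [NormedAddCommGroup E]

/-- A `C¹` function on the line which vanishes near `-∞` and which, together with its derivative,
is `O(exp (b * t))` at `+∞`: the class in which all weighted norms of rate larger than `b` are
finite. -/
structure ExpGrowth [NormedSpace ℝ E] (b : ℝ) (u : ℝ → E) : Prop where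
  contDiff : ContDiff ℝ 1 u
  eventuallyEq_zero : u =ᶠ[atBot] 0
  isBigO : u =O[atTop] fun t => Real.exp (b * t)
  isBigO_deriv : deriv u =O[atTop] fun t => Real.exp (b * t)

theorem deriv_eventuallyEq_atBot [NormedSpace ℝ E] {u v : ℝ → E} (huv : u =ᶠ[atBot] v) :
    deriv u =ᶠ[atBot] deriv v := by
  obtain ⟨T, hT⟩ := eventually_atBot.1 huv
  filter_upwards [Iio_mem_atBot T] with t ht
  refine EventuallyEq.deriv_eq ?_
  filter_upwards [Iio_mem_nhds ht] with r hr using hT r (le_of_lt hr)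

theorem deriv_eventuallyEq_atTop [NormedSpace ℝ E] {u v : ℝ → E} (huv : u =ᶠ[atTop] v) :
    deriv u =ᶠ[atTop] deriv v := by
  obtain ⟨T, hT⟩ := eventually_atTop.1 huv
  filter_upwards [Ioi_mem_atTop T] with t ht
  refine EventuallyEq.deriv_eq ?_
  filter_upwards [Ioi_mem_nhds ht] with r hr using hT r (le_of_lt hr)

/-- A bounded weight whose relative variation, infinitesimally and across each of the delays
`h i`, is at most `η`. Multiplication by such a weight commutes with the delay operator up to an
error of relative size `η`. -/
structure SlowlyVarying (η : ℝ) (h : ι → ℝ) (θ : ℝ → ℝ) : Prop where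
  contDiff : ContDiff ℝ 1 θ
  nonneg : ∀ t, 0 ≤ θ t
  bddAbove : BddAbove (range θ)
  abs_deriv_le : ∀ t, |deriv θ t| ≤ η * θ t
  abs_sub_le : ∀ i t, |θ t - θ (t - h i)| ≤ η * θ (t - h i)

namespace SlowlyVarying

variable {η : ℝ} {h : ι → ℝ} {θ : ℝ → ℝ}

theorem isBigO_one (hθ : SlowlyVarying η h θ) (l : Filter ℝ) : θ =O[l] fun _ => (1 : ℝ) := by
  obtain ⟨M, hM⟩ := hθ.bddAbove
  refine .of_bound M (.of_forall fun t => ?_)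
  rw [Real.norm_of_nonneg (hθ.nonneg t), norm_one, mul_one]
  exact hM (mem_range_self t)

theorem deriv_isBigO_one (hθ : SlowlyVarying η h θ) (l : Filter ℝ) :
    deriv θ =O[l] fun _ => (1 : ℝ) :=
  (Asymptotics.IsBigO.of_bound η (.of_forall fun t => by
    rw [Real.norm_of_nonneg (hθ.nonneg t)]; exact hθ.abs_deriv_le t)).trans (hθ.isBigO_one l)

end SlowlyVarying

namespace ExpGrowth

variable [NormedSpace ℂ E] {b β : ℝ} {u : ℝ → E} {p : ENNReal}

theorem memLp_expWeight (hu : ExpGrowth b u) (hb : b < β) (hp : p ≠ 0) (hp' : p ≠ ⊤) :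
    MemLp (expWeight β u) p :=
  memLp_expWeight_of_isBigO hp hp' hb hu.contDiff.continuous hu.eventuallyEq_zero hu.isBigO

theorem memLp_expWeight_deriv (hu : ExpGrowth b u) (hb : b < β) (hp : p ≠ 0) (hp' : p ≠ ⊤) :
    MemLp (expWeight β (deriv u)) p :=
  memLp_expWeight_of_isBigO hp hp' hb hu.contDiff.continuous_deriv_one
    ((deriv_eventuallyEq_atBot hu.eventuallyEq_zero).trans (by simp)) hu.isBigO_deriv

theorem smul_slowlyVarying {η : ℝ} {h : ι → ℝ} {θ : ℝ → ℝ} (hu : ExpGrowth b u)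
    (hθ : SlowlyVarying η h θ) : ExpGrowth b fun t => θ t • u t where
  contDiff := hθ.contDiff.smul hu.contDiff
  eventuallyEq_zero := by
    filter_upwards [hu.eventuallyEq_zero] with t ht
    simp [ht]
  isBigO := by simpa using (hθ.isBigO_one atTop).smul hu.isBigO
  isBigO_deriv := by
    have hderiv : deriv (fun t => θ t • u t) = fun t => θ t • deriv u t + deriv θ t • u t :=
      funext fun t =>
        deriv_fun_smul (hθ.contDiff.differentiable_one t) (hu.contDiff.differentiable_one t)
    rw [hderiv]
    simpa using ((hθ.isBigO_one atTop).smul hu.isBigO_deriv).add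
      ((hθ.deriv_isBigO_one atTop).smul hu.isBigO)

end ExpGrowth

end Growth

section Translates

variable {ι E : Type*} [NormedAddCommGroup E]

theorem eLpNorm_mul_norm_comp_sub_right_le {w : ℝ → E} (c : NNReal) (h : ℝ) (p : ENNReal)
    (hw : AEStronglyMeasurable w) :
    eLpNorm (fun t => (c : ℝ) * ‖w (t - h)‖) p ≤ c * eLpNorm w p := by
  rw [← eLpNorm_comp_measurePreserving hw (measurePreserving_sub_right volume h)]
  exact eLpNorm_le_nnreal_smul_eLpNorm_of_ae_le_mul (.of_forall fun t => by simp) p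

theorem eLpNorm_norm_add_sum_norm_comp_sub_right_le [Fintype ι] {w : ℝ → E} (c : ι → NNReal)
    (h : ι → ℝ) {p : ENNReal} (hp : 1 ≤ p) (hw : AEStronglyMeasurable w) :
    eLpNorm (fun t => ‖w t‖ + ∑ i, (c i : ℝ) * ‖w (t - h i)‖) p
      ≤ (1 + ∑ i, (c i : ENNReal)) * eLpNorm w p := by
  have hmeas : ∀ i, AEStronglyMeasurable fun t => (c i : ℝ) * ‖w (t - h i)‖ := fun i =>
    (hw.comp_measurePreserving (measurePreserving_sub_right volume (h i))).norm.const_mul _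
  have hadd := eLpNorm_add_le hw.norm
    (Finset.aestronglyMeasurable_fun_sum Finset.univ fun i _ => hmeas i) hp
  have hsum := eLpNorm_sum_le (s := Finset.univ) (fun i _ => hmeas i) hp
  rw [eLpNorm_norm] at hadd
  rw [add_mul, one_mul, Finset.sum_mul]
  refine hadd.trans (add_le_add_right ?_ _)
  rw [← Finset.sum_fn]
  exact hsum.trans (Finset.sum_le_sum fun i _ =>
    eLpNorm_mul_norm_comp_sub_right_le (c i) (h i) p hw)

end Translates

section WeightedEstimate

variable {ι E : Type*} [Fintype ι] [NormedAddCommGroup E] [NormedSpace ℂ E] (L : ι → E →L[ℂ] E)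
  {h : ι → ℝ} {η β b : ℝ} {θ : ℝ → ℝ} {u : ℝ → E}

theorem delayResidual_smul (h : ι → ℝ) {t : ℝ} (hθ : DifferentiableAt ℝ θ t)
    (hu : DifferentiableAt ℝ u t) :
    delayResidual L h (fun t => θ t • u t) t = θ t • delayResidual L h u t
      + (deriv θ t • u t + ∑ i, (θ t - θ (t - h i)) • L i (u (t - h i))) := by
  simp only [delayResidual, deriv_fun_smul hθ hu, ContinuousLinearMap.map_smul_of_tower, smul_sub,
    sub_smul, Finset.smul_sum, Finset.sum_sub_distrib]
  abel

theorem norm_commutator_le (hθ : SlowlyVarying η h θ) (t : ℝ) :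
    ‖deriv θ t • u t + ∑ i, (θ t - θ (t - h i)) • L i (u (t - h i))‖
      ≤ η * (‖θ t • u t‖ + ∑ i, ‖L i‖ * ‖θ (t - h i) • u (t - h i)‖) := by
  rw [mul_add, Finset.mul_sum]
  refine norm_add_le_of_le ?_ (norm_sum_le_of_le _ fun i _ => ?_)
  · calc ‖deriv θ t • u t‖ ≤ η * θ t * ‖u t‖ := by
          rw [norm_smul]
          gcongr
          exact hθ.abs_deriv_le t
      _ = η * ‖θ t • u t‖ := by rw [norm_smul, Real.norm_of_nonneg (hθ.nonneg t), mul_assoc]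
  · calc ‖(θ t - θ (t - h i)) • L i (u (t - h i))‖
        ≤ η * θ (t - h i) * (‖L i‖ * ‖u (t - h i)‖) := by
          rw [norm_smul]
          gcongr
          · exact (abs_nonneg _).trans (hθ.abs_sub_le i t)
          · exact hθ.abs_sub_le i t
          · exact (L i).le_opNorm _
      _ = η * (‖L i‖ * ‖θ (t - h i) • u (t - h i)‖) := by
          rw [norm_smul, Real.norm_of_nonneg (hθ.nonneg _)]
          ring

theorem norm_expWeight_commutator_le (hη : 0 ≤ η) (hh : ∀ i, 0 ≤ h i) (hβ : 0 ≤ β)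
    (hθ : SlowlyVarying η h θ) (t : ℝ) :
    ‖expWeight β (fun t => deriv θ t • u t + ∑ i, (θ t - θ (t - h i)) • L i (u (t - h i))) t‖
      ≤ η * (‖expWeight β (fun t => θ t • u t) t‖
        + ∑ i, ‖L i‖ * ‖expWeight β (fun t => θ t • u t) (t - h i)‖) := by
  simp only [norm_expWeight]
  calc _ ≤ Real.exp (-β * t) *
        (η * (‖θ t • u t‖ + ∑ i, ‖L i‖ * ‖θ (t - h i) • u (t - h i)‖)) := by
        gcongr
        exact norm_commutator_le L hθ t
    _ = η * (Real.exp (-β * t) * ‖θ t • u t‖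
        + ∑ i, ‖L i‖ * (Real.exp (-β * t) * ‖θ (t - h i) • u (t - h i)‖)) := by
        rw [mul_left_comm, mul_add, Finset.mul_sum]
        simp only [mul_left_comm]
    _ ≤ _ := by
        gcongr η * (_ + ∑ i, ‖L i‖ * (Real.exp ?_ * _)) with i
        nlinarith [hh i]

theorem continuous_delayResidual (h : ι → ℝ) (hu : ContDiff ℝ 1 u) :
    Continuous (delayResidual L h u) := by
  have hu₀ := hu.continuous
  exact hu.continuous_deriv_one.sub (by fun_prop)

theorem le_two_mul_of_le_add_half {N A : ENNReal} (hN : N ≠ ⊤) (h : N ≤ A + N / 2) :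
    N ≤ 2 * A := by
  have hhalf : N / 2 ≤ A := by
    refine (ENNReal.add_le_add_iff_right (ENNReal.div_ne_top hN two_ne_zero)).1 ?_
    rwa [ENNReal.add_halves]
  calc N = 2 * (N / 2) := (ENNReal.mul_div_cancel two_ne_zero ENNReal.ofNat_ne_top).symm
    _ ≤ 2 * A := by gcongr

theorem eLpNorm_expWeight_commutator_le (hη : 0 ≤ η) (hh : ∀ i, 0 ≤ h i) (hβ : 0 ≤ β)
    (hθ : SlowlyVarying η h θ) (hu : Continuous u) :
    eLpNorm (expWeight β fun t =>
        deriv θ t • u t + ∑ i, (θ t - θ (t - h i)) • L i (u (t - h i))) 2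
      ≤ ENNReal.ofReal (η * (1 + ∑ i, ‖L i‖)) * eLpNorm (expWeight β fun t => θ t • u t) 2 := by
  have hθc := hθ.contDiff.continuous
  have hcont : Continuous (expWeight β fun t => θ t • u t) := by unfold expWeight; fun_prop
  calc _ ≤ ENNReal.ofReal η * eLpNorm (fun t => ‖expWeight β (fun t => θ t • u t) t‖
          + ∑ i, (‖L i‖₊ : ℝ) * ‖expWeight β (fun t => θ t • u t) (t - h i)‖) 2 := by
        refine eLpNorm_le_mul_eLpNorm_of_ae_le_mul (.of_forall fun t => ?_) 2
        rw [Real.norm_of_nonneg (by positivity)]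
        exact norm_expWeight_commutator_le L hη hh hβ hθ t
    _ ≤ ENNReal.ofReal η * ((1 + ∑ i, (‖L i‖₊ : ENNReal)) * _) := by
        gcongr
        exact eLpNorm_norm_add_sum_norm_comp_sub_right_le _ h one_le_two
          hcont.aestronglyMeasurable
    _ = _ := by
        rw [← mul_assoc, ENNReal.ofReal_mul hη, ENNReal.ofReal_add zero_le_one (by positivity),
          ENNReal.ofReal_one, ENNReal.ofReal_sum_of_nonneg fun i _ => norm_nonneg _]
        simp only [ofReal_norm, enorm_eq_nnnorm]

end WeightedEstimate

section Absorption

variable {ι E : Type*} [Fintype ι] [NormedAddCommGroup E] [InnerProductSpace ℂ E]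
  [CompleteSpace E] {L : ι → E →L[ℂ] E} {h : ι → ℝ} {η β b C : ℝ} {θ : ℝ → ℝ} {u : ℝ → E}

theorem ExpGrowth.eLpNorm_expWeight_le (hu : ExpGrowth b u) (hb : b < β)
    (hC : ∀ s : ℂ, s.re = β → ∀ w, ‖w‖ ≤ C * ‖charOp L h s w‖) :
    eLpNorm (expWeight β u) 2
      ≤ ENNReal.ofReal C * eLpNorm (expWeight β (delayResidual L h u)) 2 :=
  eLpNorm_expWeight_le_mul_eLpNorm_delayResidual hC hu.contDiff.differentiable_one
    (by simpa using ⟨hu.memLp_expWeight hb one_ne_zero ENNReal.one_ne_top,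
      hu.memLp_expWeight hb two_ne_zero ENNReal.ofNat_ne_top⟩)
    (by simpa using ⟨hu.memLp_expWeight_deriv hb one_ne_zero ENNReal.one_ne_top,
      hu.memLp_expWeight_deriv hb two_ne_zero ENNReal.ofNat_ne_top⟩)

theorem ExpGrowth.eLpNorm_expWeight_smul_le (hu : ExpGrowth b u) (hb : b < β) (hβ : 0 ≤ β)
    (hh : ∀ i, 0 ≤ h i) (hθ : SlowlyVarying η h θ) (hη : 0 ≤ η) (hC₀ : 0 ≤ C)
    (hC : ∀ s : ℂ, s.re = β → ∀ w, ‖w‖ ≤ C * ‖charOp L h s w‖)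
    (hsmall : C * (η * (1 + ∑ i, ‖L i‖)) ≤ 1 / 2) :
    eLpNorm (expWeight β fun t => θ t • u t) 2
      ≤ 2 * (ENNReal.ofReal C * eLpNorm (expWeight β fun t => θ t • delayResidual L h u t) 2) := by
  have hv := hu.smul_slowlyVarying hθ
  set N := eLpNorm (expWeight β fun t => θ t • u t) 2
  set R := eLpNorm (expWeight β fun t => θ t • delayResidual L h u t) 2
  have hN : N ≠ ⊤ := (hv.memLp_expWeight hb two_ne_zero ENNReal.ofNat_ne_top).eLpNorm_ne_top
  refine le_two_mul_of_le_add_half hN ?_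
  have hsplit : expWeight β (delayResidual L h fun t => θ t • u t) =
      (expWeight β fun t => θ t • delayResidual L h u t) + expWeight β fun t =>
        deriv θ t • u t + ∑ i, (θ t - θ (t - h i)) • L i (u (t - h i)) := by
    ext t
    simp only [expWeight, Pi.add_apply, ← smul_add]
    rw [delayResidual_smul L h (hθ.contDiff.differentiable_one t)
      (hu.contDiff.differentiable_one t)]
  have hθc := hθ.contDiff.continuous
  have hθc' := hθ.contDiff.continuous_deriv_one
  have huc := hu.contDiff.continuous
  have hDuc := continuous_delayResidual L h hu.contDiff
  calc N ≤ ENNReal.ofReal C *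
        eLpNorm (expWeight β (delayResidual L h fun t => θ t • u t)) 2 volume :=
        hv.eLpNorm_expWeight_le hb hC
    _ ≤ ENNReal.ofReal C * (R + ENNReal.ofReal (η * (1 + ∑ i, ‖L i‖)) * N) := by
        rw [hsplit]
        gcongr
        refine (eLpNorm_add_le ?_ ?_ one_le_two).trans
          (add_le_add_right (eLpNorm_expWeight_commutator_le L hη hh hβ hθ huc) _)
        all_goals
          refine Continuous.aestronglyMeasurable ?_
          unfold expWeight
          fun_prop
    _ ≤ ENNReal.ofReal C * R + N / 2 := by
        rw [mul_add, ← mul_assoc, ← ENNReal.ofReal_mul hC₀, ENNReal.div_eq_inv_mul]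
        gcongr
        refine (ENNReal.ofReal_le_ofReal hsmall).trans_eq ?_
        rw [one_div, ENNReal.ofReal_inv_of_pos two_pos, ENNReal.ofReal_ofNat]

end Absorption

section TruncExp

/-- The bounded weight `(exp (-δ * t) + ε)⁻¹`, which increases to `exp (δ * t)` as `ε` decreases
to `0`. -/
noncomputable def truncExp (δ ε t : ℝ) : ℝ := (Real.exp (-δ * t) + ε)⁻¹

variable {δ ε : ℝ}

theorem truncExp_pos (hε : 0 < ε) (t : ℝ) : 0 < truncExp δ ε t := by
  unfold truncExp
  positivity

theorem truncExp_le_inv (hε : 0 < ε) (t : ℝ) : truncExp δ ε t ≤ ε⁻¹ :=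
  inv_anti₀ hε (le_add_of_nonneg_left (Real.exp_pos _).le)

theorem truncExp_le_exp (hε : 0 < ε) (t : ℝ) : truncExp δ ε t ≤ Real.exp (δ * t) := by
  rw [← inv_inv (Real.exp (δ * t)), ← Real.exp_neg, ← neg_mul]
  exact inv_anti₀ (Real.exp_pos _) (le_add_of_nonneg_right hε.le)

theorem exp_mul_truncExp_le_one (hε : 0 < ε) (t : ℝ) :
    Real.exp (-δ * t) * truncExp δ ε t ≤ 1 :=
  mul_inv_le_one_of_le₀ (le_add_of_nonneg_right hε.le) (by positivity)

theorem tendsto_truncExp (δ t : ℝ) :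
    Tendsto (fun ε => truncExp δ ε t) (𝓝[>] 0) (𝓝 (Real.exp (δ * t))) := by
  have hcont : ContinuousAt (fun ε => truncExp δ ε t) 0 :=
    (continuousAt_const.add continuousAt_id).inv₀ (by simp [Real.exp_ne_zero])
  have hlim := hcont.tendsto.mono_left (nhdsWithin_le_nhds (s := Ioi 0))
  simpa [truncExp, ← Real.exp_neg] using hlim

theorem hasDerivAt_truncExp (hε : 0 < ε) (t : ℝ) :
    HasDerivAt (truncExp δ ε) (δ * (Real.exp (-δ * t) * truncExp δ ε t) * truncExp δ ε t) t := by
  have hexp : HasDerivAt (fun t => Real.exp (-δ * t) + ε) (Real.exp (-δ * t) * -δ) t := by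
    simpa using (((hasDerivAt_id t).const_mul (-δ)).exp).add_const ε
  refine (hexp.fun_inv (by positivity)).congr_deriv ?_
  rw [truncExp]
  field_simp

theorem truncExp_sub (hε : 0 < ε) (t r : ℝ) :
    truncExp δ ε t - truncExp δ ε (t - r)
      = (Real.exp (δ * r) - 1) * (Real.exp (-δ * t) * truncExp δ ε t) * truncExp δ ε (t - r) := by
  have hshift : Real.exp (-δ * (t - r)) = Real.exp (δ * r) * Real.exp (-δ * t) := by
    rw [← Real.exp_add]
    ring_nf
  rw [truncExp, truncExp, inv_sub_inv (by positivity) (by positivity), hshift]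
  field_simp
  ring

theorem slowlyVarying_truncExp {ι : Type*} {h : ι → ℝ} {η : ℝ} (hδ : 0 ≤ δ) (hε : 0 < ε)
    (hh : ∀ i, 0 ≤ h i) (hη : δ ≤ η) (hη' : ∀ i, Real.exp (δ * h i) - 1 ≤ η) :
    SlowlyVarying η h (truncExp δ ε) where
  contDiff := by
    unfold truncExp
    exact (by fun_prop : ContDiff ℝ 1 fun t => Real.exp (-δ * t) + ε).inv fun t => by positivity
  nonneg t := (truncExp_pos hε t).le
  bddAbove := ⟨ε⁻¹, forall_mem_range.2 (truncExp_le_inv hε)⟩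
  abs_deriv_le t := by
    have hpos := truncExp_pos (δ := δ) hε t
    rw [(hasDerivAt_truncExp hε t).deriv, abs_of_nonneg (by positivity)]
    gcongr
    exact (mul_le_of_le_one_right hδ (exp_mul_truncExp_le_one hε t)).trans hη
  abs_sub_le i t := by
    have hpos := truncExp_pos (δ := δ) hε t
    have hpos' := truncExp_pos (δ := δ) hε (t - h i)
    have hexp : 0 ≤ Real.exp (δ * h i) - 1 :=
      sub_nonneg.2 (Real.one_le_exp (mul_nonneg hδ (hh i)))
    rw [truncExp_sub hε, abs_of_nonneg (by positivity)]
    gcongr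
    exact (mul_le_of_le_one_right hexp (exp_mul_truncExp_le_one hε t)).trans (hη' i)

theorem exists_slowlyVarying_truncExp {ι : Type*} [Finite ι] {h : ι → ℝ} {η a : ℝ} (hη : 0 < η)
    (ha : 0 < a) (hh : ∀ i, 0 ≤ h i) :
    ∃ δ > 0, δ < a ∧ ∀ ε > 0, SlowlyVarying η h (truncExp δ ε) := by
  have hexp : ∀ᶠ δ in 𝓝[>] (0 : ℝ), ∀ i, Real.exp (δ * h i) - 1 < η := by
    refine eventually_all.2 fun i => ?_
    have hlim : Tendsto (fun δ => Real.exp (δ * h i) - 1) (𝓝[>] 0) (𝓝 0) := by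
      refine Tendsto.mono_left ?_ nhdsWithin_le_nhds
      exact Continuous.tendsto' (by fun_prop) _ _ (by simp)
    exact hlim.eventually_lt_const hη
  obtain ⟨δ, hδexp, hδpos, hδlt⟩ := (hexp.and (Ioo_mem_nhdsGT (lt_min ha hη))).exists
  have hδη := (hδlt.trans_le (min_le_right _ _)).le
  exact ⟨δ, hδpos, hδlt.trans_le (min_le_left _ _), fun ε hε =>
    slowlyVarying_truncExp hδpos.le hε hh hδη fun i => (hδexp i).le⟩

end TruncExp

section Gain

variable {ι E : Type*} [Fintype ι] [NormedAddCommGroup E] [InnerProductSpace ℂ E]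
  {L : ι → E →L[ℂ] E} {h : ι → ℝ} {η β b C δ : ℝ} {u : ℝ → E}

theorem tendsto_expWeight_truncExp_smul (β δ : ℝ) (u : ℝ → E) (t : ℝ) :
    Tendsto (fun ε => expWeight β (fun t => truncExp δ ε t • u t) t) (𝓝[>] 0)
      (𝓝 (expWeight (β - δ) u t)) := by
  have hlim := ((tendsto_truncExp δ t).smul_const (u t)).const_smul (Real.exp (-β * t))
  have hexp : Real.exp (-β * t) • Real.exp (δ * t) • u t = expWeight (β - δ) u t := by
    rw [expWeight, smul_smul, ← Real.exp_add]
    ring_nf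
  rwa [hexp] at hlim

theorem norm_expWeight_truncExp_smul_le {ε : ℝ} (hε : 0 < ε) (β : ℝ) (u : ℝ → E) (t : ℝ) :
    ‖expWeight β (fun t => truncExp δ ε t • u t) t‖ ≤ ‖expWeight (β - δ) u t‖ := by
  rw [norm_expWeight, norm_expWeight, norm_smul, Real.norm_of_nonneg (truncExp_pos hε t).le]
  calc Real.exp (-β * t) * (truncExp δ ε t * ‖u t‖)
      ≤ Real.exp (-β * t) * (Real.exp (δ * t) * ‖u t‖) := by
        gcongr
        exact truncExp_le_exp hε t
    _ = Real.exp (-(β - δ) * t) * ‖u t‖ := by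
        rw [← mul_assoc, ← Real.exp_add]
        ring_nf

theorem ExpGrowth.memLp_expWeight_sub [CompleteSpace E] (hu : ExpGrowth b u) (hb : b < β)
    (hβ : 0 ≤ β) (hh : ∀ i, 0 ≤ h i) (hθ : ∀ ε > 0, SlowlyVarying η h (truncExp δ ε)) (hη : 0 ≤ η)
    (hC₀ : 0 ≤ C) (hC : ∀ s : ℂ, s.re = β → ∀ w, ‖w‖ ≤ C * ‖charOp L h s w‖)
    (hsmall : C * (η * (1 + ∑ i, ‖L i‖)) ≤ 1 / 2)
    (hDu : MemLp (expWeight (β - δ) (delayResidual L h u)) 2) :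
    MemLp (expWeight (β - δ) u) 2 := by
  have huc := hu.contDiff.continuous
  have hbound : ∀ ε > 0, eLpNorm (expWeight β fun t => truncExp δ ε t • u t) 2
      ≤ 2 * (ENNReal.ofReal C * eLpNorm (expWeight (β - δ) (delayResidual L h u)) 2) := by
    intro ε hε
    refine (hu.eLpNorm_expWeight_smul_le hb hβ hh (hθ ε hε) hη hC₀ hC hsmall).trans ?_
    gcongr
    exact eLpNorm_mono (norm_expWeight_truncExp_smul_le hε β _)
  have hmeas : ∀ ε, AEStronglyMeasurable (expWeight β fun t => truncExp δ ε t • u t) := by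
    intro ε
    have hθ : Measurable (truncExp δ ε) := by unfold truncExp; fun_prop
    exact (by fun_prop : Continuous fun t => Real.exp (-β * t)).aestronglyMeasurable.smul
      (hθ.aestronglyMeasurable.smul huc.aestronglyMeasurable)
  have hlim : eLpNorm (expWeight (β - δ) u) 2
      ≤ 2 * (ENNReal.ofReal C * eLpNorm (expWeight (β - δ) (delayResidual L h u)) 2) :=
    Lp.eLpNorm_le_of_ae_tendsto (u := 𝓝[>] (0 : ℝ)) (eventually_mem_nhdsWithin.mono hbound) hmeas
      (.of_forall (tendsto_expWeight_truncExp_smul β δ u))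
  have hcont : Continuous (expWeight (β - δ) u) := by unfold expWeight; fun_prop
  exact ⟨hcont.aestronglyMeasurable, hlim.trans_lt (ENNReal.mul_lt_top ENNReal.ofNat_lt_top
    (ENNReal.mul_lt_top ENNReal.ofReal_lt_top hDu.eLpNorm_lt_top))⟩

end Gain

section PointwiseDecay

theorem tendsto_zero_of_memLp_two_of_memLp_two_deriv {E : Type*} [NormedAddCommGroup E]
    [InnerProductSpace ℝ E] {w : ℝ → E} (hw : Differentiable ℝ w) (hw₂ : MemLp w 2)
    (hw₂' : MemLp (deriv w) 2) : Tendsto w atTop (𝓝 0) := by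
  have hderiv : ∀ t, HasDerivAt (fun t => ‖w t‖ ^ 2) (2 * inner ℝ (w t) (deriv w t)) t :=
    fun t => (hw t).hasDerivAt.norm_sq
  have hint : Integrable fun t => ‖w t‖ ^ 2 := hw₂.integrable_norm_pow two_ne_zero
  have hinner : Integrable fun t => inner ℝ (w t) (deriv w t) :=
    (hw₂.norm.integrable_mul hw₂'.norm).mono'
      (hw₂.aestronglyMeasurable.inner hw₂'.aestronglyMeasurable)
      (.of_forall fun t => norm_inner_le_norm _ _)
  have hsq := tendsto_zero_of_hasDerivAt_of_integrableOn_Ioi (a := 0) (fun t _ => hderiv t)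
    (hinner.const_mul 2).integrableOn hint.integrableOn
  rw [tendsto_zero_iff_norm_tendsto_zero]
  simpa using hsq.sqrt

variable {ι E : Type*} [Fintype ι] [NormedAddCommGroup E] [InnerProductSpace ℂ E]
  {L : ι → E →L[ℂ] E} {h : ι → ℝ} {β : ℝ} {u : ℝ → E}

theorem hasDerivAt_expWeight (β : ℝ) {t : ℝ} (hu : DifferentiableAt ℝ u t) :
    HasDerivAt (expWeight β u) (expWeight β (deriv u) t - β • expWeight β u t) t := by
  have hexp : HasDerivAt (fun t => Real.exp (-β * t)) (Real.exp (-β * t) * -β) t := by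
    simpa using ((hasDerivAt_id t).const_mul (-β)).exp
  refine (hexp.smul hu.hasDerivAt).congr_deriv ?_
  rw [expWeight, expWeight, smul_smul, mul_neg, neg_smul, mul_comm β, sub_eq_add_neg]

theorem memLp_expWeight_deriv_of_delayResidual {p : ENNReal} (hu : MemLp (expWeight β u) p)
    (hDu : MemLp (expWeight β (delayResidual L h u)) p) :
    MemLp (expWeight β (deriv u)) p := by
  have hsum := hDu.add (memLp_finsetSum Finset.univ fun i _ =>
    memLp_expWeight_clm_comp_sub_right (L i) (h i) hu)
  refine hsum.ae_eq (.of_forall fun t => ?_)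
  simp [expWeight, delayResidual, smul_sub, Finset.smul_sum]

theorem isBigO_exp_of_memLp_expWeight (hd : Differentiable ℝ u)
    (hu : MemLp (expWeight β u) 2) (hDu : MemLp (expWeight β (delayResidual L h u)) 2) :
    u =O[atTop] fun t => Real.exp (β * t) := by
  have hderiv : deriv (expWeight β u) = fun t => expWeight β (deriv u) t - β • expWeight β u t :=
    funext fun t => (hasDerivAt_expWeight β (hd t)).deriv
  have hd' : Differentiable ℝ (expWeight β u) :=
    fun t => (hasDerivAt_expWeight β (hd t)).differentiableAt
  have hmem : MemLp (deriv (expWeight β u)) 2 := by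
    rw [hderiv]
    exact (memLp_expWeight_deriv_of_delayResidual hu hDu).sub (hu.const_smul β)
  let _ := InnerProductSpace.complexToReal (G := E)
  have hlim : Tendsto (expWeight β u) atTop (𝓝 0) :=
    tendsto_zero_of_memLp_two_of_memLp_two_deriv hd' hu hmem
  have hbdd : expWeight β u =O[atTop] fun t => Real.exp (0 * t) := by
    simpa using hlim.isBigO_one ℝ
  have hinv : expWeight (-β) (expWeight β u) = u := by
    ext t
    simp [expWeight, smul_smul, ← Real.exp_add]
  simpa only [hinv, zero_sub, neg_neg] using isBigO_expWeight (-β) hbdd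

end PointwiseDecay

section Cutoff

variable {E : Type*} [NormedAddCommGroup E] [NormedSpace ℝ E]

/-- The function `x`, smoothly switched on between `t = 1` and `t = 2`. This makes a solution
defined on a half-line into a function on the whole line. -/
noncomputable def cutoff (x : ℝ → E) (t : ℝ) : E := Real.smoothTransition (t - 1) • x t

theorem cutoff_eq_zero (x : ℝ → E) {t : ℝ} (ht : t ≤ 1) : cutoff x t = 0 := by
  rw [cutoff, Real.smoothTransition.zero_of_nonpos (sub_nonpos.2 ht), zero_smul]

theorem cutoff_eventuallyEq_atBot (x : ℝ → E) : cutoff x =ᶠ[atBot] 0 := by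
  filter_upwards [Iic_mem_atBot 1] with t ht using cutoff_eq_zero x ht

theorem cutoff_eventuallyEq_atTop (x : ℝ → E) : cutoff x =ᶠ[atTop] x := by
  filter_upwards [Ici_mem_atTop 2] with t (ht : 2 ≤ t)
  rw [cutoff, Real.smoothTransition.one_of_one_le (by linarith), one_smul]

theorem contDiff_cutoff {n : ℕ∞} {x : ℝ → E} (hx : ContDiffOn ℝ n x (Ioi 0)) :
    ContDiff ℝ n (cutoff x) := by
  refine contDiff_iff_contDiffAt.2 fun t => ?_
  rcases lt_or_ge t 1 with ht | ht
  · have hzero : cutoff x =ᶠ[𝓝 t] fun _ => 0 := by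
      filter_upwards [Iio_mem_nhds ht] with r hr using cutoff_eq_zero x (le_of_lt hr)
    exact contDiffAt_const.congr_of_eventuallyEq hzero
  · exact (Real.smoothTransition.contDiffAt.comp t (by fun_prop)).smul
      (hx.contDiffAt (Ioi_mem_nhds (by linarith)))

end Cutoff

section Solution

variable {ι E : Type*} [Fintype ι] [NormedAddCommGroup E]

theorem delayResidual_eventuallyEq [NormedSpace ℂ E] (L : ι → E →L[ℂ] E) {h : ι → ℝ}
    {u v : ℝ → E} {l : Filter ℝ} (hl : ∀ i, Tendsto (fun t => t - h i) l l) (huv : u =ᶠ[l] v)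
    (huv' : deriv u =ᶠ[l] deriv v) : delayResidual L h u =ᶠ[l] delayResidual L h v := by
  filter_upwards [huv', eventually_all.2 fun i => (hl i).eventually huv] with t hderiv hdelay
  simp only [delayResidual, hderiv, hdelay]

/-- `x` is a solution of `x' t = ∑ i, L i (x (t - h i)) + F t` for `t > 0`, with a continuous
history on `[-H, 0]`. -/
structure IsDelaySolution [NormedSpace ℂ E] (L : ι → E →L[ℂ] E) (h : ι → ℝ) (H : ℝ) (F x : ℝ → E) :
    Prop where
  continuousOn : ContinuousOn x (Ici (-H))
  hasDerivAt : ∀ t > 0, HasDerivAt x (∑ i, L i (x (t - h i)) + F t) t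

namespace IsDelaySolution

variable [NormedSpace ℂ E] {L : ι → E →L[ℂ] E} {h : ι → ℝ} {H b : ℝ} {F x : ℝ → E}

theorem contDiffOn (hx : IsDelaySolution L h H F x) (hH : ∀ i, h i ≤ H)
    (hF : ContinuousOn F (Ici 0)) : ContDiffOn ℝ 1 x (Ioi 0) := by
  have hderiv : EqOn (deriv x) (fun t => ∑ i, L i (x (t - h i)) + F t) (Ioi 0) :=
    fun t ht => (hx.hasDerivAt t ht).deriv
  have hdelay : ∀ i, ContinuousOn (fun t => L i (x (t - h i))) (Ioi 0) := fun i =>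
    (L i).continuous.comp_continuousOn <|
      hx.continuousOn.comp (by fun_prop) fun t (ht : 0 < t) => by
        have := hH i
        simp only [mem_Ici]
        linarith
  rw [← zero_add 1, contDiffOn_succ_iff_deriv_of_isOpen isOpen_Ioi]
  refine ⟨fun t ht => (hx.hasDerivAt t ht).differentiableAt.differentiableWithinAt, by simp, ?_⟩
  refine contDiffOn_zero.2 (ContinuousOn.congr ?_ hderiv)
  exact (continuousOn_finsetSum _ fun i _ => hdelay i).add (hF.mono Ioi_subset_Ici_self)

theorem delayResidual_eventuallyEq (hx : IsDelaySolution L h H F x) :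
    delayResidual L h x =ᶠ[atTop] F := by
  filter_upwards [Ioi_mem_atTop 0] with t ht
  rw [delayResidual, (hx.hasDerivAt t ht).deriv, add_sub_cancel_left]

theorem isBigO_deriv (hx : IsDelaySolution L h H F x) (hF : F =O[atTop] fun t => Real.exp (b * t))
    (hxb : x =O[atTop] fun t => Real.exp (b * t)) :
    deriv x =O[atTop] fun t => Real.exp (b * t) := by
  have hdelay : ∀ i, (fun t => L i (x (t - h i))) =O[atTop] fun t => Real.exp (b * t) := by
    intro i
    have hshift := hxb.comp_tendsto (tendsto_atTop_add_const_right atTop (-h i) tendsto_id)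
    refine ((L i).isBigO_comp _ _).trans (hshift.trans (.of_bound (Real.exp (b * -h i))
      (.of_forall fun t => le_of_eq ?_)))
    simp only [Function.comp_apply, Real.norm_eq_abs, Real.abs_exp, ← Real.exp_add, id]
    ring_nf
  have hsum := (Asymptotics.IsBigO.fun_sum (s := Finset.univ) fun i _ => hdelay i).add hF
  refine hsum.congr' ?_ .rfl
  filter_upwards [Ioi_mem_atTop 0] with t ht using (hx.hasDerivAt t ht).deriv.symm

theorem expGrowth_cutoff (hx : IsDelaySolution L h H F x) (hH : ∀ i, h i ≤ H)
    (hFc : ContinuousOn F (Ici 0)) (hF : F =O[atTop] fun t => Real.exp (b * t))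
    (hxb : x =O[atTop] fun t => Real.exp (b * t)) : ExpGrowth b (cutoff x) where
  contDiff := contDiff_cutoff (hx.contDiffOn hH hFc)
  eventuallyEq_zero := cutoff_eventuallyEq_atBot x
  isBigO := hxb.congr' (cutoff_eventuallyEq_atTop x).symm .rfl
  isBigO_deriv := (hx.isBigO_deriv hF hxb).congr'
    (deriv_eventuallyEq_atTop (cutoff_eventuallyEq_atTop x)).symm .rfl

theorem memLp_expWeight_delayResidual_cutoff {β c : ℝ} (hx : IsDelaySolution L h H F x)
    (hH : ∀ i, h i ≤ H) (hFc : ContinuousOn F (Ici 0))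
    (hF : F =O[atTop] fun t => Real.exp (c * t)) (hc : c < β) :
    MemLp (expWeight β (delayResidual L h (cutoff x))) 2 := by
  have hzero := cutoff_eventuallyEq_atBot x
  have hbot := _root_.delayResidual_eventuallyEq L
    (fun i => tendsto_atBot_add_const_right atBot (-h i) tendsto_id) hzero
    (deriv_eventuallyEq_atBot hzero)
  have hone := cutoff_eventuallyEq_atTop x
  have htop := _root_.delayResidual_eventuallyEq L
    (fun i => tendsto_atTop_add_const_right atTop (-h i) tendsto_id) hone
    (deriv_eventuallyEq_atTop hone)
  refine memLp_expWeight_of_isBigO two_ne_zero ENNReal.ofNat_ne_top hc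
    (continuous_delayResidual L h (contDiff_cutoff (hx.contDiffOn hH hFc)))
    (hbot.trans (.of_forall fun t => ?_))
    (hF.congr' (htop.trans hx.delayResidual_eventuallyEq).symm .rfl)
  simp [delayResidual]

end IsDelaySolution

theorem exists_isBigO_exp_sub {E : Type*} [NormedAddCommGroup E] [InnerProductSpace ℂ E]
    [CompleteSpace E] {L : ι → E →L[ℂ] E} {h : ι → ℝ} {H a : ℝ} (hh : ∀ i, 0 ≤ h i)
    (hH : ∀ i, h i ≤ H) (hunit : ∀ s : ℂ, 0 ≤ s.re → IsUnit (charOp L h s)) (ha : 0 < a) :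
    ∃ d > 0, ∀ F x : ℝ → E, IsDelaySolution L h H F x → ContinuousOn F (Ici 0) → ∀ b ≥ 0,
      (x =O[atTop] fun t => Real.exp (b * t)) → (F =O[atTop] fun t => Real.exp ((b - a) * t)) →
      x =O[atTop] fun t => Real.exp ((b - d) * t) := by
  obtain ⟨C, hCpos, hC⟩ := exists_norm_le_mul_norm_charOp L hh hunit
  set η := (2 * (C * (1 + ∑ i, ‖L i‖)))⁻¹ with hη_def
  have hη : 0 < η := by positivity
  have hsmall : C * (η * (1 + ∑ i, ‖L i‖)) ≤ 1 / 2 := by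
    rw [hη_def]
    field_simp
    exact le_rfl
  obtain ⟨δ, hδ, hδa, hθ⟩ := exists_slowlyVarying_truncExp hη ha hh
  refine ⟨δ / 2, by positivity, fun F x hx hFc b hb hxb hF => ?_⟩
  have hFb : F =O[atTop] fun t => Real.exp (b * t) := hF.trans <| .of_bound' <| by
    filter_upwards [Ici_mem_atTop 0] with t (ht : 0 ≤ t)
    simp only [Real.norm_eq_abs, Real.abs_exp]
    gcongr
    linarith
  have hu := hx.expGrowth_cutoff hH hFc hFb hxb
  have hDu := hx.memLp_expWeight_delayResidual_cutoff hH hFc hF (β := b + δ / 2 - δ) (by linarith)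
  have hmem := hu.memLp_expWeight_sub (by linarith) (by linarith) hh hθ hη.le hCpos.le
    (fun s hs => hC s (by linarith)) hsmall hDu
  have hbig := isBigO_exp_of_memLp_expWeight hu.contDiff.differentiable_one hmem hDu
  refine (hbig.congr' (cutoff_eventuallyEq_atTop x) .rfl).congr_right fun t => ?_
  ring_nf

end Solution

section APrioriGrowth

variable {E : Type*} [NormedAddCommGroup E] [NormedSpace ℝ E] {x x' : ℝ → E} {H T α : ℝ}

theorem norm_le_of_norm_deriv_le_exp {B K t₀ : ℝ} (hB : 0 < B) (hK : 0 ≤ K) (ht₀ : T ≤ t₀)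
    (hx : ∀ t ∈ Icc T t₀, HasDerivAt x (x' t) t)
    (hx' : ∀ t ∈ Ico T t₀, ‖x' t‖ ≤ K * Real.exp (B * t)) :
    ‖x t₀‖ ≤ ‖x T‖ + K / B * Real.exp (B * t₀) := by
  have hbound : ∀ t, HasDerivAt (fun t => ‖x T‖ + K / B * Real.exp (B * t))
      (K * Real.exp (B * t)) t := fun t => by
    refine ((((hasDerivAt_id t).const_mul B).exp.const_mul (K / B)).const_add _).congr_deriv ?_
    simp only [id]
    field_simp
  exact image_norm_le_of_norm_deriv_right_le_deriv_boundary'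
    (B := fun t => ‖x T‖ + K / B * Real.exp (B * t))
    (fun t ht => (hx t ht).continuousAt.continuousWithinAt)
    (fun t ht => (hx t (Ico_subset_Icc_self ht)).hasDerivWithinAt)
    (le_add_of_nonneg_right (by positivity))
    (fun t _ => (hbound t).continuousAt.continuousWithinAt)
    (fun t _ => (hbound t).hasDerivWithinAt) hx' (right_mem_Icc.2 ht₀)

theorem norm_le_exp_of_isMaxOn {t₀ : ℝ} (hα : 0 ≤ α) (hT : 0 ≤ T) (ht₀ : T ≤ t₀)
    (hx : ∀ t ≥ T, HasDerivAt x (x' t) t)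
    (hx' : ∀ t ≥ T, ∀ K, (∀ τ ∈ Icc (t - H) t, ‖x τ‖ ≤ K) → ‖x' t‖ ≤ α * K)
    (hmax : IsMaxOn (fun t => Real.exp (-(2 * α + 1) * t) * ‖x t‖) (Icc (T - H) t₀) t₀) :
    Real.exp (-(2 * α + 1) * t₀) * ‖x t₀‖ ≤ 2 * ‖x T‖ := by
  set B := 2 * α + 1
  set N := Real.exp (-B * t₀) * ‖x t₀‖
  have hB : 0 < B := by positivity
  have hN : 0 ≤ N := by positivity
  have hexp : ∀ t, Real.exp (-B * t) * Real.exp (B * t) = 1 := fun t => by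
    rw [← Real.exp_add]
    simp
  have hwin : ∀ τ ∈ Icc (T - H) t₀, ‖x τ‖ ≤ N * Real.exp (B * τ) := fun τ hτ =>
    calc ‖x τ‖ = Real.exp (-B * τ) * ‖x τ‖ * Real.exp (B * τ) := by
          rw [mul_right_comm, hexp, one_mul]
      _ ≤ N * Real.exp (B * τ) := by
          gcongr
          exact hmax hτ
  have hderiv : ∀ t ∈ Ico T t₀, ‖x' t‖ ≤ α * N * Real.exp (B * t) := fun t ht => by
    rw [mul_assoc]
    refine hx' t ht.1 _ fun τ hτ => ?_
    refine (hwin τ ⟨by linarith [hτ.1, ht.1], hτ.2.trans ht.2.le⟩).trans ?_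
    gcongr
    exact hτ.2
  have hfence := norm_le_of_norm_deriv_le_exp hB (by positivity) ht₀
    (fun t ht => hx t ht.1) hderiv
  have hN_le : N ≤ ‖x T‖ + N / 2 :=
    calc N ≤ Real.exp (-B * t₀) * (‖x T‖ + α * N / B * Real.exp (B * t₀)) :=
          mul_le_mul_of_nonneg_left hfence (Real.exp_pos _).le
      _ = Real.exp (-B * t₀) * ‖x T‖ + α * N / B := by linear_combination (α * N / B) * hexp t₀
      _ ≤ ‖x T‖ + N / 2 := by
          refine add_le_add ?_ ?_
          · refine mul_le_of_le_one_left (norm_nonneg _) (Real.exp_le_one_iff.2 ?_)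
            nlinarith
          · rw [div_le_div_iff₀ hB two_pos]
            nlinarith
  linarith

theorem isBigO_exp_of_norm_deriv_le (hα : 0 ≤ α) (hT : 0 ≤ T) (hH : 0 ≤ H)
    (hxc : ContinuousOn x (Ici (T - H))) (hx : ∀ t ≥ T, HasDerivAt x (x' t) t)
    (hx' : ∀ t ≥ T, ∀ K, (∀ τ ∈ Icc (t - H) t, ‖x τ‖ ≤ K) → ‖x' t‖ ≤ α * K) :
    x =O[atTop] fun t => Real.exp ((2 * α + 1) * t) := by
  set f := fun t => Real.exp (-(2 * α + 1) * t) * ‖x t‖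
  have hfc : ContinuousOn f (Ici (T - H)) := by fun_prop
  obtain ⟨M, hM⟩ := isCompact_Icc.bddAbove_image (hfc.mono (Icc_subset_Ici_self (a := T)))
  have hf : ∀ r ≥ T, f r ≤ max M (2 * ‖x T‖) := by
    intro r hr
    obtain ⟨t₀, ht₀, hmax⟩ := isCompact_Icc.exists_isMaxOn (nonempty_Icc.2 (by linarith))
      (hfc.mono (Icc_subset_Ici_self (a := r)))
    refine (hmax ⟨by linarith, le_rfl⟩).trans ?_
    rcases le_total t₀ T with h | h
    · exact le_max_of_le_left (hM (mem_image_of_mem f ⟨ht₀.1, h⟩))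
    · exact le_max_of_le_right (norm_le_exp_of_isMaxOn hα hT h hx hx'
        (hmax.on_subset (Icc_subset_Icc_right ht₀.2)))
  refine .of_bound (max M (2 * ‖x T‖)) ?_
  filter_upwards [Ici_mem_atTop T] with t ht
  rw [Real.norm_of_nonneg (Real.exp_pos _).le, ← inv_mul_le_iff₀' (Real.exp_pos _),
    ← Real.exp_neg, ← neg_mul]
  exact hf t ht

end APrioriGrowth

section Forcing

variable {E : Type*} [NormedAddCommGroup E] {F x : ℝ → E} {γ : ℝ → ℝ} {H a b : ℝ}

theorem eventually_norm_le_exp_mul_of_le_mul_sSup (hH : 0 ≤ H)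
    (hγ : Tendsto (fun t => Real.exp (a * t) * γ t) atTop (𝓝 0))
    (hF : ∀ t, 0 ≤ t → ‖F t‖ ≤ γ t * sSup ((fun τ => ‖x τ‖) '' Icc (t - H) t)) :
    ∀ᶠ t in atTop, ∀ K, (∀ τ ∈ Icc (t - H) t, ‖x τ‖ ≤ K) → ‖F t‖ ≤ Real.exp (-a * t) * K := by
  filter_upwards [hγ.eventually_le_const one_pos, Ici_mem_atTop 0] with t hγt ht K hK
  have hsup : sSup ((fun τ => ‖x τ‖) '' Icc (t - H) t) ≤ K :=
    csSup_le ((nonempty_Icc.2 (by linarith)).image _) (forall_mem_image.2 hK)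
  have hγle : γ t ≤ Real.exp (-a * t) := by
    rwa [neg_mul, Real.exp_neg, ← one_div, le_div_iff₀' (Real.exp_pos _)]
  calc ‖F t‖ ≤ γ t * sSup ((fun τ => ‖x τ‖) '' Icc (t - H) t) := hF t ht
    _ ≤ Real.exp (-a * t) * K :=
      mul_le_mul hγle hsup (Real.sSup_nonneg (forall_mem_image.2 fun _ _ => norm_nonneg _))
        (Real.exp_pos _).le

theorem isBigO_exp_of_eventually_norm_le_exp_mul (hb : 0 ≤ b)
    (hF : ∀ᶠ t in atTop, ∀ K, (∀ τ ∈ Icc (t - H) t, ‖x τ‖ ≤ K) → ‖F t‖ ≤ Real.exp (-a * t) * K)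
    (hx : x =O[atTop] fun t => Real.exp (b * t)) :
    F =O[atTop] fun t => Real.exp ((b - a) * t) := by
  obtain ⟨M, hM, hxM⟩ := hx.exists_pos
  obtain ⟨T, hT⟩ := eventually_atTop.1 hxM.bound
  refine .of_bound M ?_
  filter_upwards [hF, Ici_mem_atTop (T + H)] with t hFt (ht : T + H ≤ t)
  have hwin : ∀ τ ∈ Icc (t - H) t, ‖x τ‖ ≤ M * Real.exp (b * t) := fun τ hτ => by
    refine (hT τ (by linarith [hτ.1])).trans ?_
    rw [Real.norm_eq_abs, Real.abs_exp]
    gcongr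
    exact hτ.2
  refine (hFt _ hwin).trans_eq ?_
  rw [Real.norm_eq_abs, Real.abs_exp, mul_left_comm, ← Real.exp_add]
  ring_nf

end Forcing

section Decay

theorem exists_neg_of_forall_nonneg_sub {P : ℝ → Prop} {b d : ℝ} (hd : 0 < d) (hb : P b)
    (hstep : ∀ b ≥ 0, P b → P (b - d)) : ∃ c < 0, P c := by
  obtain ⟨n, hn⟩ := exists_nat_gt (b / d)
  rw [div_lt_iff₀ hd] at hn
  induction n generalizing b with
  | zero => exact ⟨b, by simpa using hn, hb⟩
  | succ n ih =>
    rcases lt_or_ge b 0 with hneg | hnonneg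
    · exact ⟨b, hneg, hb⟩
    · refine ih (hstep b hnonneg hb) ?_
      push_cast at hn
      linarith

theorem exists_forall_norm_le_mul_exp {E : Type*} [NormedAddCommGroup E] {x : ℝ → E} {b : ℝ}
    (hx : ContinuousOn x (Ici 0)) (hxb : x =O[atTop] fun t => Real.exp (b * t)) :
    ∃ M > 0, ∀ t, 0 ≤ t → ‖x t‖ ≤ M * Real.exp (b * t) := by
  obtain ⟨M, hM, hxM⟩ := hxb.exists_pos
  obtain ⟨T, hT⟩ := eventually_atTop.1 hxM.bound
  have hcont : ContinuousOn (fun t => Real.exp (-b * t) * ‖x t‖) (Icc 0 T) := by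
    have := hx.mono (Icc_subset_Ici_self (a := T))
    fun_prop
  obtain ⟨K, hK⟩ := isCompact_Icc.bddAbove_image hcont
  refine ⟨max M K, lt_max_of_lt_left hM, fun t ht => ?_⟩
  rcases le_total T t with h | h
  · refine (hT t h).trans ?_
    rw [Real.norm_eq_abs, Real.abs_exp]
    gcongr
    exact le_max_left M K
  · have hle := (hK (mem_image_of_mem _ ⟨ht, h⟩)).trans (le_max_right M K)
    simpa only [neg_mul, Real.exp_neg, inv_mul_le_iff₀' (Real.exp_pos _)] using hle

end Decay

section Stability

variable {ι E : Type*} [Fintype ι] [NormedAddCommGroup E] {h : ι → ℝ} {H a : ℝ}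
  {F x : ℝ → E}

theorem IsDelaySolution.exists_isBigO_exp [NormedSpace ℂ E] {L : ι → E →L[ℂ] E}
    (hx : IsDelaySolution L h H F x) (hh : ∀ i, 0 ≤ h i) (hhH : ∀ i, h i ≤ H) (hH : 0 ≤ H)
    (ha : 0 < a) (hF : ∀ᶠ t in atTop, ∀ K, (∀ τ ∈ Icc (t - H) t, ‖x τ‖ ≤ K) →
      ‖F t‖ ≤ Real.exp (-a * t) * K) :
    ∃ b, x =O[atTop] fun t => Real.exp (b * t) := by
  obtain ⟨T, hT⟩ := eventually_atTop.1 hF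
  have hT₁ : max T 1 ≥ 1 := le_max_right T 1
  refine ⟨_, isBigO_exp_of_norm_deriv_le (T := max T 1) (α := ∑ i, ‖L i‖ + 1) (by positivity)
    (by linarith) hH (hx.continuousOn.mono (Ici_subset_Ici.2 (by linarith)))
    (fun t ht => hx.hasDerivAt t (by linarith)) fun t ht K hK => ?_⟩
  have hK₀ : 0 ≤ K := (norm_nonneg _).trans (hK t ⟨by linarith, le_rfl⟩)
  rw [add_mul, Finset.sum_mul, one_mul]
  refine norm_add_le_of_le (norm_sum_le_of_le _ fun i _ => (L i).le_opNorm_of_le ?_)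
    ((hT t (le_of_max_le_left ht) K hK).trans ?_)
  · exact hK _ ⟨by linarith [hhH i], by linarith [hh i]⟩
  · exact mul_le_of_le_one_left hK₀ (Real.exp_le_one_iff.2 (by nlinarith))

theorem stmt6_general [InnerProductSpace ℂ E] [CompleteSpace E] {L : ι → E →L[ℂ] E}
    {γ : ℝ → ℝ} (hh : ∀ i, 0 ≤ h i) (hhH : ∀ i, h i ≤ H) (hH : 0 ≤ H)
    (hunit : ∀ s : ℂ, 0 ≤ s.re → IsUnit (charOp L h s))
    (hFc : ContinuousOn F (Ici 0)) (hx : IsDelaySolution L h H F x)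
    (hF : ∀ t, 0 ≤ t → ‖F t‖ ≤ γ t * sSup ((fun τ => ‖x τ‖) '' Icc (t - H) t)) (ha : 0 < a)
    (hγ : Tendsto (fun t => Real.exp (a * t) * γ t) atTop (𝓝 0)) :
    ∃ M > 0, ∃ c > 0, ∀ t, 0 ≤ t → ‖x t‖ ≤ M * Real.exp (-c * t) := by
  have hFwin := eventually_norm_le_exp_mul_of_le_mul_sSup hH hγ hF
  obtain ⟨B, hB⟩ := hx.exists_isBigO_exp hh hhH hH ha hFwin
  obtain ⟨d, hd, himprove⟩ := exists_isBigO_exp_sub hh hhH hunit ha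
  obtain ⟨b, hb, hxb⟩ := exists_neg_of_forall_nonneg_sub hd hB fun b hb hxb =>
    himprove F x hx hFc b hb hxb (isBigO_exp_of_eventually_norm_le_exp_mul hb hFwin hxb)
  obtain ⟨M, hM, hbound⟩ := exists_forall_norm_le_mul_exp
    (hx.continuousOn.mono (Ici_subset_Ici.2 (by linarith))) hxb
  exact ⟨M, hM, -b, neg_pos.2 hb, by simpa only [neg_neg] using hbound⟩

theorem isUnit_charOp_of_charFn_ne_zero {n m : ℕ} {A : Fin (m + 1) → Matrix (Fin n) (Fin n) ℂ}
    {hd : Fin (m + 1) → ℝ} {s : ℂ} (hs : charFn A hd s ≠ 0) :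
    IsUnit (charOp (fun i => Matrix.toEuclideanCLM (𝕜 := ℂ) (A i)) hd s) := by
  have hunit : IsUnit (s • (1 : Matrix (Fin n) (Fin n) ℂ)
      - ∑ i, Complex.exp (-(hd i : ℂ) * s) • A i) :=
    (Matrix.isUnit_iff_isUnit_det _).2 hs.isUnit
  simpa [charOp] using hunit.map (Matrix.toEuclideanCLM (n := Fin n) (𝕜 := ℂ))

end Stability

/-- **Corollary 3.4** (exponential stability of the perturbed equation): if all
characteristic zeros have real part `≤ -ρ < 0` and the perturbation satisfies
`‖F(t)‖ ≤ γ(t) ‖x_t‖` with `e^{a t} γ(t) → 0` for some `a > 0`, then the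
solution converges to zero exponentially. -/
theorem stmt6 {n m : ℕ} (hn : 1 ≤ n) (hm : 1 ≤ m)
    (A : Fin (m + 1) → Matrix (Fin n) (Fin n) ℂ)
    (hd : Fin (m + 1) → ℝ) (hd0 : hd 0 = 0) (hdnn : ∀ i, 0 ≤ hd i)
    (H : ℝ) (hH : IsGreatest (Set.range hd) H)
    (ρ : ℝ) (hρ : 0 < ρ)
    (hneg : ∀ z : ℂ, charFn A hd z = 0 → z.re ≤ -ρ)
    (F : ℝ → EuclideanSpace ℂ (Fin n)) (hFc : ContinuousOn F (Set.Ici 0))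
    (x : ℝ → EuclideanSpace ℂ (Fin n)) (hxc : ContinuousOn x (Set.Ici (-H)))
    (hx : ∀ t > 0, HasDerivAt x ((∑ i, mulVecE (A i) (x (t - hd i))) + F t) t)
    (γ : ℝ → ℝ) (hγc : ContinuousOn γ (Set.Ici 0)) (hγnn : ∀ t, 0 ≤ t → 0 ≤ γ t)
    (hFb : ∀ t, 0 ≤ t → ‖F t‖ ≤ γ t * slidingSup H x t)
    (a : ℝ) (ha : 0 < a)
    (hγdec : Tendsto (fun t => Real.exp (a * t) * γ t) atTop (nhds 0)) :
    ∃ M > 0, ∃ c > 0, ∀ t, 0 ≤ t → ‖x t‖ ≤ M * Real.exp (-c * t) := by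
  obtain ⟨⟨i₀, hi₀⟩, hub⟩ := hH
  have hhH : ∀ i, hd i ≤ H := fun i => hub ⟨i, rfl⟩
  have hunit : ∀ s : ℂ, 0 ≤ s.re →
      IsUnit (charOp (fun i => Matrix.toEuclideanCLM (𝕜 := ℂ) (A i)) hd s) := fun s hs =>
    isUnit_charOp_of_charFn_ne_zero fun hzero => by linarith [hneg s hzero]
  exact stmt6_general hdnn hhH (hi₀ ▸ hdnn i₀) hunit hFc ⟨hxc, hx⟩ hFb ha hγdec
end

section
/- Suppose there exists ρ > 0 such that every characteristic zero λ satisfies Re λ ≤ −ρ. Let x be a solution of the perturbed equation with ‖F(t)‖ ≤ γ(t)·‖x_t‖ + K₀ for all t ≥ 0, where K₀ ≥ 0 and γ : [0,∞) → [0,∞) is continuous with e^{a t} γ(t) → 0 as t → ∞ for some a > 0. Then x is uniformly bounded: sup_{t ≥ −h} ‖x(t)‖ < ∞. -/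
open Filter MeasureTheory

/-!
Cut the solution into windows of a length `L` exceeding every delay. By variation of constants, the
window `ξ k` over `[t₀ + k L, t₀ + (k + 1) L]` satisfies `ξ (k + 1) = M (ξ k) + O(‖F‖)`, where the
monodromy operator `M` on `C([0, L], E)` is compact: one step of the equation integrates, and the
part of the step that refers to the unknown window is a Volterra operator, which is removed by
inverting `1 - delayIntegral A h hL 0`.

An eigenvector of `M` for `μ` with `1 ≤ ‖μ‖` extends to a Floquet solution
`x t = e^{l t} p t` with `e^{l L} = μ` and `p` periodic. Since the equation is autonomous, each
Fourier coefficient of `p` is annihilated by the characteristic operator at some point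
`l + 2 π i k / L` of the closed right half-plane, hence vanishes, and so does `x`. Thus `M` has
spectral radius below one and `∑ ‖M ^ j‖` converges. Since `γ → 0`, the forcing is eventually
bounded by a constant plus a small multiple of the two adjacent windows, and the latter term is
absorbed when the perturbed orbit `ξ` is estimated at its maximum.
-/

section Operators

open Set
open scoped NNReal

theorem isCompactOperator_of_lipschitzWith {𝕜 X Y E : Type*} [NontriviallyNormedField 𝕜]
    [PseudoMetricSpace X] [CompactSpace X] [SeminormedAddCommGroup Y] [NormedSpace 𝕜 Y]
    [NormedAddCommGroup E] [NormedSpace 𝕜 E] [ProperSpace E] (T : Y →L[𝕜] C(X, E)) (C : ℝ≥0)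
    (hT : ∀ y, LipschitzWith (C * ‖y‖₊) (T y)) : IsCompactOperator T := by
  let e := ContinuousMap.linearIsometryBoundedOfCompact X E 𝕜
  suffices IsCompactOperator (e ∘ T) by
    simpa [Function.comp_def] using this.continuous_comp e.symm.continuous
  rw [isCompactOperator_iff_exists_mem_nhds_isCompact_closure_image]
  refine ⟨Metric.closedBall 0 1, Metric.closedBall_mem_nhds 0 one_pos, ?_⟩
  refine BoundedContinuousFunction.arzela_ascoli (Metric.closedBall 0 ‖T‖)
    (isCompact_closedBall 0 ‖T‖) _ ?_ ?_
  · rintro _ s ⟨y, hy, rfl⟩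
    rw [mem_closedBall_zero_iff] at hy ⊢
    calc ‖T y s‖ ≤ ‖T y‖ := (T y).norm_coe_le_norm s
      _ ≤ ‖T‖ := T.unit_le_opNorm y hy
  · refine (LipschitzWith.uniformEquicontinuous _ C ?_).equicontinuous
    rintro ⟨_, y, hy, rfl⟩
    refine (hT y).weaken (mul_le_of_le_one_right' ?_)
    rwa [mem_closedBall_zero_iff] at hy

theorem spectralRadius_lt_one_of_isCompactOperator {Y : Type*} [NormedAddCommGroup Y]
    [NormedSpace ℂ Y] [CompleteSpace Y] {T : Y →L[ℂ] Y} (hT : IsCompactOperator T)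
    (heig : ∀ (μ : ℂ) (y : Y), 1 ≤ ‖μ‖ → T y = μ • y → y = 0) : spectralRadius ℂ T < 1 := by
  rcases subsingleton_or_nontrivial Y with hY | hY
  · simp [spectrum.SpectralRadius.of_subsingleton]
  refine spectrum.spectralRadius_lt_of_forall_lt (r := 1) T fun μ hμ => ?_
  by_contra! hμ1
  have hμ0 : μ ≠ 0 := by
    rintro rfl
    simp at hμ1
  obtain ⟨y, hy⟩ := ((hT.hasEigenvalue_iff_mem_spectrum hμ0).2 hμ).exists_hasEigenvector
  exact hy.2 (heig μ y hμ1 hy.apply_eq_smul)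

theorem summable_norm_pow_of_spectralRadius_lt_one {R : Type*} [NormedRing R] [NormedAlgebra ℂ R]
    [CompleteSpace R] {a : R} (ha : spectralRadius ℂ a < 1) : Summable fun n : ℕ => ‖a ^ n‖ := by
  obtain ⟨r, hr1, hr⟩ := ENNReal.lt_iff_exists_nnreal_btwn.1 (ENNReal.one_lt_inv.2 ha)
  have hseries := (spectrum.hasFPowerSeriesOnBall_inverse_one_sub_smul ℂ a).exchange_radius
    ((spectrum.differentiableOn_inverse_one_sub_smul hr).hasFPowerSeriesOnBall
      (one_pos.trans (by exact_mod_cast hr1)))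
  have hsum := FormalMultilinearSeries.summable_norm_mul_pow _ (r := 1) (hr1.trans_le hseries.r_le)
  simpa only [NNReal.coe_one, one_pow, mul_one, ContinuousMultilinearMap.norm_mkPiRing] using hsum

end Operators

section PerturbedOrbits

variable {𝕜 Y : Type*} [NontriviallyNormedField 𝕜] [SeminormedAddCommGroup Y] [NormedSpace 𝕜 Y]

theorem norm_orbit_le_sum_norm_pow (T : Y →L[𝕜] Y) {b : ℝ} (n : ℕ) (ξ : ℕ → Y)
    (hξ : ∀ k < n, ‖ξ (k + 1) - T (ξ k)‖ ≤ b) :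
    ‖ξ n‖ ≤ ‖(T ^ n) (ξ 0)‖ + (∑ j ∈ Finset.range n, ‖T ^ j‖) * b := by
  induction n generalizing ξ with
  | zero => simp
  | succ n ih =>
    have htail := ih (fun k => ξ (k + 1)) fun k hk => hξ (k + 1) (by lia)
    have hhead : ‖(T ^ n) (ξ 1)‖ ≤ ‖(T ^ (n + 1)) (ξ 0)‖ + ‖T ^ n‖ * b :=
      calc ‖(T ^ n) (ξ 1)‖ = ‖(T ^ (n + 1)) (ξ 0) + (T ^ n) (ξ 1 - T (ξ 0))‖ := by
            simp [pow_succ]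
        _ ≤ ‖(T ^ (n + 1)) (ξ 0)‖ + ‖T ^ n‖ * ‖ξ 1 - T (ξ 0)‖ :=
            (norm_add_le _ _).trans (by gcongr; exact (T ^ n).le_opNorm _)
        _ ≤ ‖(T ^ (n + 1)) (ξ 0)‖ + ‖T ^ n‖ * b := by
            gcongr
            exact hξ 0 n.succ_pos
    rw [Finset.sum_range_succ]
    linarith

theorem norm_perturbed_orbit_le {T : Y →L[𝕜] Y} (hT : Summable fun j : ℕ => ‖T ^ j‖) {δ D : ℝ}
    (hδ0 : 0 ≤ δ) (hD : 0 ≤ D) (hδ : 2 * ((∑' j : ℕ, ‖T ^ j‖) * δ) ≤ 1) {ξ : ℕ → Y}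
    (hξ : ∀ k, ‖ξ (k + 1) - T (ξ k)‖ ≤ δ * max ‖ξ k‖ ‖ξ (k + 1)‖ + D) (n : ℕ) :
    ‖ξ n‖ ≤ 2 * (∑' j : ℕ, ‖T ^ j‖) * (‖ξ 0‖ + D) := by
  set S := ∑' j : ℕ, ‖T ^ j‖
  obtain ⟨k, hkn, hk⟩ := (Finset.range (n + 1)).exists_max_image (fun j => ‖ξ j‖) ⟨0, by simp⟩
  have hmax : ∀ j ≤ n, ‖ξ j‖ ≤ ‖ξ k‖ := fun j hj => hk j (by simpa [Nat.lt_succ_iff] using hj)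
  have hkn : k ≤ n := by simpa [Nat.lt_succ_iff] using hkn
  have hpow : ‖T ^ k‖ ≤ S := hT.le_tsum k fun _ _ => norm_nonneg _
  have hsum : ∑ j ∈ Finset.range k, ‖T ^ j‖ ≤ S := hT.sum_le_tsum _ fun _ _ => norm_nonneg _
  have hdefect : ∀ j < k, ‖ξ (j + 1) - T (ξ j)‖ ≤ δ * ‖ξ k‖ + D := fun j hj =>
    (hξ j).trans (by gcongr; exact max_le (hmax j (by lia)) (hmax (j + 1) (by lia)))
  have hsup : ‖ξ k‖ ≤ S * ‖ξ 0‖ + S * (δ * ‖ξ k‖ + D) :=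
    (norm_orbit_le_sum_norm_pow T k ξ hdefect).trans
      (by gcongr; exact (T ^ k).le_of_opNorm_le hpow _)
  have habsorb : 2 * (S * δ) * ‖ξ k‖ ≤ 1 * ‖ξ k‖ := by gcongr
  linarith [hmax n le_rfl]

end PerturbedOrbits

section Integrals

open Set

variable {E : Type*} [NormedAddCommGroup E]

theorem eq_zero_of_norm_le_mul_integral_norm {f : ℝ → E} (hf : Continuous f) {C L : ℝ}
    (hfC : ∀ t ∈ Icc 0 L, ‖f t‖ ≤ C * ∫ s in (0 : ℝ)..t, ‖f s‖) {t : ℝ} (ht : t ∈ Icc 0 L) :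
    f t = 0 := by
  have hderiv (s : ℝ) : HasDerivAt (fun r => ∫ u in (0 : ℝ)..r, ‖f u‖) ‖f s‖ s :=
    (hf.norm.integral_hasStrictDerivAt 0 s).hasDerivAt
  have hint : ‖∫ s in (0 : ℝ)..t, ‖f s‖‖ ≤ 0 := by
    have hbound := norm_le_gronwallBound_of_norm_deriv_right_le (δ := 0) (K := C) (ε := 0)
      (fun s _ => (hderiv s).continuousAt.continuousWithinAt)
      (fun s _ => (hderiv s).hasDerivWithinAt) (by simp) (fun s hs => ?_) t ht
    · simpa only [gronwallBound_ε0_δ0] using hbound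
    · rw [norm_norm, add_zero, Real.norm_of_nonneg
        (intervalIntegral.integral_nonneg hs.1 fun _ _ => norm_nonneg _)]
      exact hfC s ⟨hs.1, hs.2.le⟩
  have hft := hfC t ht
  rwa [norm_le_zero_iff.1 hint, mul_zero, norm_le_zero_iff] at hft

theorem eq_zero_of_fourierCoeff_eq_zero [NormedSpace ℂ E] [CompleteSpace E] {T : ℝ}
    [Fact (0 < T)] {f : C(AddCircle T, E)} (hf : ∀ k, fourierCoeff f k = 0) : f = 0 := by
  ext t
  refine SeparatingDual.eq_zero_of_forall_dual_eq_zero (R := ℂ) fun φ => ?_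
  let g : C(AddCircle T, ℂ) := (φ : C(E, ℂ)).comp f
  have hg : fourierCoeff g = 0 := by
    ext k
    have hint : Integrable (fun s => fourier (-k) s • f s) AddCircle.haarAddCircle :=
      Continuous.integrable_of_hasCompactSupport (by fun_prop) (.of_compactSpace _)
    have hφ := φ.integral_comp_comm hint
    simp only [map_smul] at hφ
    exact hφ.trans (by rw [← fourierCoeff, hf k, map_zero, Pi.zero_apply])
  have hsum : HasSum (fun k => fourierCoeff g k • fourier k t) (g t) :=
    has_pointwise_sum_fourier_series_of_summable (by rw [hg]; exact summable_zero) t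
  simp only [hg, Pi.zero_apply, zero_smul] at hsum
  exact hsum.unique hasSum_zero

end Integrals

namespace DelayEquation

open Set

variable {E : Type*} [NormedAddCommGroup E]

section History

variable {L : ℝ}

/-- The restriction of a curve `x` to `[t, t + L]`, as an element of the fixed state space of
continuous functions on `[0, L]`. -/
def window (L : ℝ) (x : C(ℝ, E)) (t : ℝ) : C(Icc (0 : ℝ) L, E) :=
  x.comp ⟨fun s => t + s, by fun_prop⟩

/-- The norm `‖x_t‖` of the history of length `H` of `x` at time `t`. -/
noncomputable def historyNorm (H : ℝ) (x : ℝ → E) (t : ℝ) : ℝ :=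
  sSup ((fun τ => ‖x τ‖) '' Icc (t - H) t)

theorem historyNorm_nonneg (H : ℝ) (x : ℝ → E) (t : ℝ) : 0 ≤ historyNorm H x t :=
  Real.sSup_nonneg (forall_mem_image.2 fun _ _ => norm_nonneg _)

theorem norm_le_norm_window (x : C(ℝ, E)) {t r : ℝ} (hr : r ∈ Icc t (t + L)) :
    ‖x r‖ ≤ ‖window L x t‖ := by
  have hrt : r - t ∈ Icc 0 L := ⟨by linarith [hr.1], by linarith [hr.2]⟩
  simpa [window] using (window L x t).norm_coe_le_norm ⟨r - t, hrt⟩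

theorem historyNorm_le_max_norm_window {H : ℝ} (hHL : H ≤ L) (x : C(ℝ, E)) {t r : ℝ}
    (hr : r ∈ Icc t (t + L)) :
    historyNorm H x r ≤ max ‖window L x (t - L)‖ ‖window L x t‖ := by
  refine Real.sSup_le (forall_mem_image.2 fun τ hτ => ?_) (by positivity)
  rcases le_total τ t with hτt | hτt
  · exact (norm_le_norm_window x ⟨by linarith [hτ.1, hr.1], by linarith⟩).trans (le_max_left _ _)
  · exact (norm_le_norm_window x ⟨hτt, hτ.2.trans hr.2⟩).trans (le_max_right _ _)

theorem norm_le_of_norm_window_le (hL : 0 < L) {x : C(ℝ, E)} {t B : ℝ}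
    (hB : ∀ k : ℕ, ‖window L x (t + k * L)‖ ≤ B) {r : ℝ} (hr : t ≤ r) : ‖x r‖ ≤ B := by
  have h0 : 0 ≤ (r - t) / L := div_nonneg (sub_nonneg.2 hr) hL.le
  have hlow := (le_div_iff₀ hL).1 (Nat.floor_le h0)
  have hupp := (div_lt_iff₀ hL).1 (Nat.lt_floor_add_one ((r - t) / L))
  exact (norm_le_norm_window x ⟨by linarith, by linarith⟩).trans (hB ⌊(r - t) / L⌋₊)

theorem norm_window_le_mul_max_norm_window {H : ℝ} (hHL : H ≤ L) {x F : C(ℝ, E)} {δ K t : ℝ}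
    (hδ : 0 ≤ δ) (hK : 0 ≤ K) (hF : ∀ r ≥ t, ‖F r‖ ≤ δ * historyNorm H x r + K) :
    ‖window L F t‖ ≤ δ * max ‖window L x (t - L)‖ ‖window L x t‖ + K := by
  refine (ContinuousMap.norm_le _ (by positivity)).2 fun s => ?_
  have hs : t + s ∈ Icc t (t + L) := ⟨by linarith [s.2.1], by linarith [s.2.2]⟩
  calc ‖F (t + s)‖ ≤ δ * historyNorm H x (t + s) + K := hF _ hs.1
    _ ≤ δ * max ‖window L x (t - L)‖ ‖window L x t‖ + K := by
      gcongr
      exact historyNorm_le_max_norm_window hHL x hs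

end History

variable [NormedSpace ℂ E] {ι : Type*} [Fintype ι]

section Floquet

/-- The characteristic operator of `x'(t) = ∑ i, A i (x (t - h i))`: the curve `e^{z t} v` is a
solution exactly when `v` lies in its kernel. -/
noncomputable def characteristicOperator (A : ι → E →L[ℂ] E) (h : ι → ℝ) (z : ℂ) : E →L[ℂ] E :=
  z • 1 - ∑ i, Complex.exp (-(h i : ℂ) * z) • A i

/-- The curve `x` with its exponential growth `e^{z t}` factored out. A Floquet solution of period
`L` and exponent `z` is one whose twist by `z` is `L`-periodic. -/
noncomputable def expTwist (z : ℂ) (x : ℝ → E) (t : ℝ) : E :=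
  Complex.exp (-z * t) • x t

theorem continuous_expTwist {x : ℝ → E} (hx : Continuous x) (z : ℂ) :
    Continuous (expTwist z x) := by
  unfold expTwist
  fun_prop

theorem periodic_expTwist_add {x : ℝ → E} {z : ℂ} {L : ℝ} (hL : L ≠ 0)
    (hx : (expTwist z x).Periodic L) (k : ℤ) :
    (expTwist (z + 2 * Real.pi * Complex.I * k / L) x).Periodic L := by
  intro t
  have htwist (s : ℝ) : expTwist (z + 2 * Real.pi * Complex.I * k / L) x s =
      Complex.exp (-(2 * Real.pi * Complex.I * k / L) * s) • expTwist z x s := by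
    rw [expTwist, expTwist, smul_smul, ← Complex.exp_add]
    ring_nf
  have hexp : Complex.exp (-(2 * Real.pi * Complex.I * k / L) * (t + L : ℝ)) =
      Complex.exp (-(2 * Real.pi * Complex.I * k / L) * t) := by
    have hL' : (L : ℂ) ≠ 0 := by exact_mod_cast hL
    rw [Complex.exp_eq_exp_iff_exists_int]
    refine ⟨-k, ?_⟩
    push_cast
    field_simp
    ring
  rw [htwist, htwist, hx t, hexp]

theorem sub_period_of_periodic_expTwist {x : ℝ → E} {z : ℂ} {L : ℝ}
    (hx : (expTwist z x).Periodic L) (t : ℝ) : x (t - L) = Complex.exp (-(z * L)) • x t := by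
  have ht : Complex.exp (-z * (t - L : ℝ)) • x (t - L) = Complex.exp (-z * t) • x t := hx.sub_eq t
  rw [← smul_right_inj (Complex.exp_ne_zero (-z * (t - L : ℝ))), ht, smul_smul, ← Complex.exp_add]
  push_cast
  ring_nf

theorem hasDerivAt_expTwist (A : ι → E →L[ℂ] E) (h : ι → ℝ) (z : ℂ) {x : ℝ → E} {t : ℝ}
    (hx : HasDerivAt x (∑ i, A i (x (t - h i))) t) :
    HasDerivAt (expTwist z x) (∑ i, Complex.exp (-(h i : ℂ) * z) • A i (expTwist z x (t - h i)) -
      z • expTwist z x t) t := by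
  have hexp : HasDerivAt (fun s : ℝ => Complex.exp (-z * s)) (Complex.exp (-z * t) * -z) t := by
    simpa using (((hasDerivAt_id (t : ℂ)).const_mul (-z)).cexp).comp_ofReal
  refine (hexp.smul hx).congr_deriv ?_
  have hterm (i : ι) : Complex.exp (-(h i : ℂ) * z) • A i (expTwist z x (t - h i)) =
      Complex.exp (-z * t) • A i (x (t - h i)) := by
    rw [expTwist, map_smul, smul_smul, ← Complex.exp_add]
    push_cast
    ring_nf
  rw [Finset.sum_congr rfl fun i _ => hterm i, expTwist, Finset.smul_sum, smul_smul, mul_neg,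
    neg_smul, mul_comm z, ← sub_eq_add_neg]

theorem characteristicOperator_integral_expTwist_eq_zero [CompleteSpace E]
    (A : ι → E →L[ℂ] E) (h : ι → ℝ) {z : ℂ} {x : ℝ → E} {L : ℝ} (hL : 0 ≤ L) (hxc : Continuous x)
    (hper : (expTwist z x).Periodic L)
    (hx : ∀ t ∈ Ioo 0 L, HasDerivAt x (∑ i, A i (x (t - h i))) t) :
    characteristicOperator A h z (∫ t in 0..L, expTwist z x t) = 0 := by
  have hc := continuous_expTwist hxc z
  have hshift (i : ι) : ∫ t in 0..L, A i (expTwist z x (t - h i)) =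
      A i (∫ t in 0..L, expTwist z x t) := by
    rw [ContinuousLinearMap.intervalIntegral_comp_comm _
        (Continuous.intervalIntegrable (by fun_prop) _ _),
      intervalIntegral.integral_comp_sub_right (expTwist z x)]
    congr 1
    convert hper.intervalIntegral_add_eq (0 - h i) 0 using 2 <;> ring
  have hftc := intervalIntegral.integral_eq_sub_of_hasDerivAt_of_le hL hc.continuousOn
    (fun t ht => hasDerivAt_expTwist A h z (hx t ht))
    (Continuous.intervalIntegrable (by fun_prop) _ _)
  rw [intervalIntegral.integral_sub (Continuous.intervalIntegrable (by fun_prop) _ _)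
      (Continuous.intervalIntegrable (by fun_prop) _ _),
    intervalIntegral.integral_finsetSum
      fun i _ => Continuous.intervalIntegrable (by fun_prop) _ _,
    hper.eq, sub_self] at hftc
  simp only [intervalIntegral.integral_smul, hshift] at hftc
  simpa [characteristicOperator, sub_eq_zero] using (sub_eq_zero.1 hftc).symm

theorem eq_zero_of_integral_expTwist_eq_zero [CompleteSpace E] {z : ℂ} {x : ℝ → E} {L : ℝ}
    (hL : 0 < L) (hxc : Continuous x) (hper : (expTwist z x).Periodic L)
    (hint : ∀ k : ℤ, ∫ t in 0..L, expTwist (z + 2 * Real.pi * Complex.I * k / L) x t = 0) :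
    x = 0 := by
  have : Fact (0 < L) := ⟨hL⟩
  let P : C(AddCircle L, E) := ⟨hper.lift, continuous_coinduced_dom.2 (continuous_expTwist hxc z)⟩
  have hP : P = 0 := by
    refine eq_zero_of_fourierCoeff_eq_zero fun k => ?_
    rw [fourierCoeff_eq_intervalIntegral _ k 0, zero_add]
    convert smul_zero (1 / L) using 2
    rw [← hint k]
    congr 1
    ext t
    rw [fourier_coe_apply]
    change _ • expTwist z x t = _
    rw [expTwist, expTwist, smul_smul, ← Complex.exp_add]
    push_cast
    ring_nf
  ext t
  have ht : expTwist z x t = 0 := DFunLike.congr_fun hP (t : AddCircle L)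
  simpa [expTwist] using ht

theorem eq_zero_of_periodic_expTwist [CompleteSpace E] {A : ι → E →L[ℂ] E} {h : ι → ℝ}
    (hinj : ∀ z : ℂ, 0 ≤ z.re → Function.Injective (characteristicOperator A h z))
    {z : ℂ} (hz : 0 ≤ z.re) {x : ℝ → E} {L : ℝ} (hL : 0 < L) (hxc : Continuous x)
    (hper : (expTwist z x).Periodic L)
    (hx : ∀ t ∈ Ioo 0 L, HasDerivAt x (∑ i, A i (x (t - h i))) t) : x = 0 := by
  refine eq_zero_of_integral_expTwist_eq_zero hL hxc hper fun k => ?_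
  have hre : (z + 2 * Real.pi * Complex.I * k / L).re = z.re := by
    simp [Complex.div_ofReal_re]
  refine (map_eq_zero_iff _ (hinj (z + 2 * Real.pi * Complex.I * k / L) (hre ▸ hz))).1 ?_
  exact characteristicOperator_integral_expTwist_eq_zero A h hL.le hxc
    (periodic_expTwist_add hL.ne' hper k) hx

end Floquet

section Windows

variable {L : ℝ}

theorem exists_periodic_expTwist_window_eq (hL : 0 < L) {z : ℂ} {y : C(Icc (0 : ℝ) L, E)}
    (hy : y ⟨L, hL.le, le_rfl⟩ = Complex.exp (z * L) • y ⟨0, le_rfl, hL.le⟩) :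
    ∃ x : C(ℝ, E), (expTwist z x).Periodic L ∧ window L x 0 = y := by
  have : Fact (0 < L) := ⟨hL⟩
  let w : ℝ → E := expTwist z (IccExtend hL.le y)
  have hw : Continuous w := continuous_expTwist y.continuous.Icc_extend' z
  have hw0 : w 0 = w (0 + L) := by
    simp only [w, expTwist, zero_add, IccExtend_left, IccExtend_right, hy, smul_smul,
      ← Complex.exp_add]
    simp
  let P : AddCircle L → E := AddCircle.liftIco L 0 w
  have hP : Continuous P := AddCircle.liftIco_zero_continuous (by simpa using hw0) hw.continuousOn
  have hPw {t : ℝ} (ht : t ∈ Icc 0 L) : P t = w t := by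
    rcases ht.2.eq_or_lt with rfl | htL
    · rw [AddCircle.coe_period, ← QuotientAddGroup.mk_zero]
      exact (AddCircle.liftIco_zero_coe_apply ⟨le_rfl, hL⟩).trans (by simpa using hw0)
    · exact AddCircle.liftIco_zero_coe_apply ⟨ht.1, htL⟩
  refine ⟨⟨fun t => Complex.exp (z * t) • P t, by fun_prop⟩, fun t => ?_, ?_⟩
  · simp [expTwist, smul_smul, ← Complex.exp_add]
  · ext ⟨s, hs⟩
    simp [window, hPw hs, w, expTwist, smul_smul, ← Complex.exp_add, IccExtend_of_mem _ _ hs]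

theorem norm_integral_projIcc_le (hL : 0 ≤ L) (y : C(Icc (0 : ℝ) L, E)) (a b : ℝ) :
    ‖∫ r in (projIcc 0 L hL a : ℝ)..projIcc 0 L hL b, IccExtend hL y r‖ ≤ ‖y‖ * |b - a| :=
  (intervalIntegral.norm_integral_le_of_norm_le_const fun _ _ => y.norm_coe_le_norm _).trans
    (mul_le_mul_of_nonneg_left (abs_projIcc_sub_projIcc hL) (norm_nonneg y))

/-- The operator sending `y` to `s ↦ ∫ r in c..c + s, y r`, where `y : C([0, L], E)` is extended by
zero to the line; the projections to `[0, L]` implement the extension. -/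
noncomputable def windowIntegral (hL : 0 ≤ L) (c : ℝ) :
    C(Icc (0 : ℝ) L, E) →L[ℂ] C(Icc (0 : ℝ) L, E) :=
  LinearMap.mkContinuous
    { toFun y :=
        ⟨fun s => ∫ r in (projIcc 0 L hL c : ℝ)..projIcc 0 L hL (c + s), IccExtend hL y r,
          (intervalIntegral.continuous_primitive
            (fun _ _ => y.continuous.Icc_extend'.intervalIntegrable _ _) _).comp (by fun_prop)⟩
      map_add' y y' := by
        ext s
        exact intervalIntegral.integral_add (y.continuous.Icc_extend'.intervalIntegrable _ _)
          (y'.continuous.Icc_extend'.intervalIntegrable _ _)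
      map_smul' a y := by
        ext s
        exact intervalIntegral.integral_smul a _ }
    L fun y => by
      refine (ContinuousMap.norm_le _ (by positivity)).2 fun s => ?_
      refine (norm_integral_projIcc_le hL y c (c + s)).trans ?_
      rw [add_sub_cancel_left, abs_of_nonneg s.2.1, mul_comm]
      gcongr
      exact s.2.2

theorem windowIntegral_apply (hL : 0 ≤ L) (c : ℝ) (y : C(Icc (0 : ℝ) L, E)) (s : Icc (0 : ℝ) L) :
    windowIntegral hL c y s =
      ∫ r in (projIcc 0 L hL c : ℝ)..projIcc 0 L hL (c + s), IccExtend hL y r :=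
  rfl

theorem windowIntegral_window (hL : 0 ≤ L) (c : ℝ) (x : C(ℝ, E)) (t : ℝ) (s : Icc (0 : ℝ) L) :
    windowIntegral hL c (window L x t) s =
      ∫ r in (t + projIcc 0 L hL c)..(t + projIcc 0 L hL (c + s)), x r := by
  rw [windowIntegral_apply, ← intervalIntegral.integral_comp_add_left]
  refine intervalIntegral.integral_congr fun r hr => ?_
  exact IccExtend_of_mem hL _ (uIcc_subset_Icc (projIcc 0 L hL c).2 (projIcc 0 L hL (c + s)).2 hr)

theorem isCompactOperator_windowIntegral [ProperSpace E] (hL : 0 ≤ L) (c : ℝ) :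
    IsCompactOperator (windowIntegral (E := E) hL c) := by
  refine isCompactOperator_of_lipschitzWith _ 1 fun y => LipschitzWith.of_dist_le_mul fun s s' => ?_
  have hy : ∀ a b, IntervalIntegrable (IccExtend hL y) volume a b := fun a b =>
    y.continuous.Icc_extend'.intervalIntegrable a b
  rw [dist_eq_norm, windowIntegral_apply, windowIntegral_apply,
    intervalIntegral.integral_interval_sub_left (hy _ _) (hy _ _)]
  refine (norm_integral_projIcc_le hL y _ _).trans_eq ?_
  rw [add_sub_add_left_eq_sub, Subtype.dist_eq, Real.dist_eq]
  simp

/-- The operator sending `y` to `s ↦ ∫ r in c..c + s, ∑ i, A i (y (r - h i))`, where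
`y : C([0, L], E)` is extended by zero to the line. -/
noncomputable def delayIntegral (A : ι → E →L[ℂ] E) (h : ι → ℝ) (hL : 0 ≤ L) (c : ℝ) :
    C(Icc (0 : ℝ) L, E) →L[ℂ] C(Icc (0 : ℝ) L, E) :=
  ∑ i, (A i).compLeftContinuous ℂ (Icc (0 : ℝ) L) ∘L windowIntegral hL (c - h i)

theorem delayIntegral_apply (A : ι → E →L[ℂ] E) (h : ι → ℝ) (hL : 0 ≤ L) (c : ℝ)
    (y : C(Icc (0 : ℝ) L, E)) (s : Icc (0 : ℝ) L) :
    delayIntegral A h hL c y s = ∑ i, A i (windowIntegral hL (c - h i) y s) := by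
  rw [delayIntegral, sum_apply, ContinuousMap.sum_apply]
  rfl

theorem isCompactOperator_delayIntegral [ProperSpace E] (A : ι → E →L[ℂ] E) (h : ι → ℝ)
    (hL : 0 ≤ L) (c : ℝ) : IsCompactOperator (delayIntegral A h hL c) :=
  sum_mem (S := compactOperator (RingHom.id ℂ) C(Icc (0 : ℝ) L, E) C(Icc (0 : ℝ) L, E))
    fun i _ => (isCompactOperator_windowIntegral hL (c - h i)).clm_comp
      ((A i).compLeftContinuous ℂ (Icc (0 : ℝ) L))

/-- The contribution of the window `y` of a solution over `[t - L, t]` to its window over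
`[t, t + L]`: the value at time `t`, and the integral of the delayed terms that refer to times
before `t`. -/
noncomputable def pastOperator (A : ι → E →L[ℂ] E) (h : ι → ℝ) (hL : 0 ≤ L) :
    C(Icc (0 : ℝ) L, E) →L[ℂ] C(Icc (0 : ℝ) L, E) :=
  ContinuousLinearMap.const ℂ (Icc (0 : ℝ) L) ∘L ContinuousMap.evalCLM ℂ ⟨L, hL, le_rfl⟩ +
    delayIntegral A h hL L

theorem pastOperator_apply (A : ι → E →L[ℂ] E) (h : ι → ℝ) (hL : 0 ≤ L)
    (y : C(Icc (0 : ℝ) L, E)) (s : Icc (0 : ℝ) L) :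
    pastOperator A h hL y s = y ⟨L, hL, le_rfl⟩ + delayIntegral A h hL L y s :=
  rfl

theorem isCompactOperator_pastOperator [ProperSpace E] (A : ι → E →L[ℂ] E) (h : ι → ℝ)
    (hL : 0 ≤ L) : IsCompactOperator (pastOperator A h hL) := by
  have heval := isCompactOperator_of_locallyCompactSpace_dom
    (ContinuousMap.evalCLM ℂ ⟨L, hL, le_rfl⟩ : C(Icc (0 : ℝ) L, E) →L[ℂ] E)
  exact (heval.clm_comp (ContinuousLinearMap.const ℂ (Icc (0 : ℝ) L))).add
    (isCompactOperator_delayIntegral A h hL L)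

theorem pastOperator_window_add_delayIntegral_window {A : ι → E →L[ℂ] E} {h : ι → ℝ} (hL : 0 ≤ L)
    (hh : ∀ i, h i ∈ Icc 0 L) (x : C(ℝ, E)) (t : ℝ) (s : Icc (0 : ℝ) L) :
    pastOperator A h hL (window L x (t - L)) s + delayIntegral A h hL 0 (window L x t) s =
      x t + ∑ i, A i (∫ r in (t - h i)..(t - h i + s), x r) := by
  have hsplit (i : ι) : windowIntegral hL (L - h i) (window L x (t - L)) s +
      windowIntegral hL (0 - h i) (window L x t) s = ∫ r in (t - h i)..(t - h i + s), x r := by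
    obtain ⟨⟨h0, hiL⟩, hs0, hsL⟩ := hh i, s.2
    rw [windowIntegral_window, windowIntegral_window]
    rcases le_total (s : ℝ) (h i) with hs | hs
    · rw [projIcc_of_mem hL (x := L - h i) ⟨by linarith, by linarith⟩,
        projIcc_of_mem hL (x := L - h i + s) ⟨by linarith, by linarith⟩,
        projIcc_of_le_left hL (x := 0 - h i) (by linarith),
        projIcc_of_le_left hL (x := 0 - h i + s) (by linarith), intervalIntegral.integral_same,
        add_zero]
      ring_nf
    · rw [projIcc_of_mem hL (x := L - h i) ⟨by linarith, by linarith⟩,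
        projIcc_of_right_le hL (x := L - h i + s) (by linarith),
        projIcc_of_le_left hL (x := 0 - h i) (by linarith),
        projIcc_of_mem hL (x := 0 - h i + s) ⟨by linarith, by linarith⟩]
      have hx := intervalIntegral.integral_add_adjacent_intervals (μ := volume)
        (x.continuous.intervalIntegrable (t - h i) t)
        (x.continuous.intervalIntegrable t (t - h i + s))
      convert hx using 3 <;> ring
  simp only [pastOperator_apply, delayIntegral_apply, ← hsplit, map_add, Finset.sum_add_distrib,
    add_assoc]
  simp [window]

end Windows

section Monodromy

variable {L : ℝ}

theorem norm_delayIntegral_zero_apply_le {A : ι → E →L[ℂ] E} {h : ι → ℝ} (hL : 0 ≤ L)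
    (hh : ∀ i, 0 ≤ h i) (y : C(Icc (0 : ℝ) L, E)) (s : Icc (0 : ℝ) L) :
    ‖delayIntegral A h hL 0 y s‖ ≤ (∑ i, ‖A i‖) * ∫ r in (0 : ℝ)..s, ‖IccExtend hL y r‖ := by
  have hterm (i : ι) : ‖windowIntegral hL (0 - h i) y s‖ ≤
      ∫ r in (0 : ℝ)..s, ‖IccExtend hL y r‖ := by
    have hs : (projIcc 0 L hL (0 - h i + s) : ℝ) ≤ s := by
      rw [coe_projIcc]
      exact max_le s.2.1 ((min_le_right _ _).trans (by linarith [hh i]))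
    rw [windowIntegral_apply, projIcc_of_le_left hL (x := 0 - h i) (by linarith [hh i])]
    refine (intervalIntegral.norm_integral_le_integral_norm (projIcc 0 L hL _).2.1).trans ?_
    exact intervalIntegral.integral_mono_interval le_rfl (projIcc 0 L hL _).2.1 hs
      (Eventually.of_forall fun _ => norm_nonneg _)
      (y.continuous.Icc_extend'.norm.intervalIntegrable _ _)
  rw [delayIntegral_apply, Finset.sum_mul]
  exact (norm_sum_le _ _).trans (Finset.sum_le_sum fun i _ => (A i).le_opNorm_of_le (hterm i))

theorem isUnit_one_sub_delayIntegral_zero [ProperSpace E] {A : ι → E →L[ℂ] E} {h : ι → ℝ}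
    (hL : 0 ≤ L) (hh : ∀ i, 0 ≤ h i) : IsUnit (1 - delayIntegral A h hL 0) := by
  rcases (isCompactOperator_delayIntegral A h hL 0).hasEigenvalue_or_mem_resolventSet one_ne_zero
    with heig | hres
  · obtain ⟨y, hy⟩ := heig.exists_hasEigenvector
    refine (hy.2 ?_).elim
    have hfix : delayIntegral A h hL 0 y = y := by simpa using hy.apply_eq_smul
    ext ⟨t, ht⟩
    have hzero := eq_zero_of_norm_le_mul_integral_norm (f := IccExtend hL y) (L := L)
      (C := ∑ i, ‖A i‖) y.continuous.Icc_extend' (fun s hs => ?_) ht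
    · rwa [IccExtend_of_mem hL y ht] at hzero
    · rw [IccExtend_of_mem hL y hs]
      nth_rw 1 [← hfix]
      exact norm_delayIntegral_zero_apply_le hL hh y ⟨s, hs⟩
  · simpa [spectrum.mem_resolventSet_iff] using hres

/-- The operator propagating the window over `[t - L, t]` of a solution of
`x'(t) = ∑ i, A i (x (t - h i))` to its window over `[t, t + L]`. -/
noncomputable def monodromy (A : ι → E →L[ℂ] E) (h : ι → ℝ) (hL : 0 ≤ L) :
    C(Icc (0 : ℝ) L, E) →L[ℂ] C(Icc (0 : ℝ) L, E) :=
  Ring.inverse (1 - delayIntegral A h hL 0) * pastOperator A h hL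

theorem isCompactOperator_monodromy [ProperSpace E] (A : ι → E →L[ℂ] E) (h : ι → ℝ)
    (hL : 0 ≤ L) : IsCompactOperator (monodromy A h hL) :=
  (isCompactOperator_pastOperator A h hL).clm_comp _

theorem hasDerivAt_of_integral_equation [CompleteSpace E] {A : ι → E →L[ℂ] E} {h : ι → ℝ}
    {x : ℝ → E} (hxc : Continuous x)
    (hx : ∀ s ∈ Icc 0 L, x s = x 0 + ∑ i, A i (∫ r in (-h i)..(-h i + s), x r))
    {t : ℝ} (ht : t ∈ Ioo 0 L) : HasDerivAt x (∑ i, A i (x (t - h i))) t := by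
  have hprim (i : ι) : HasDerivAt (fun s => ∫ r in (-h i)..(-h i + s), x r) (x (t - h i)) t := by
    simpa [neg_add_eq_sub] using HasDerivAt.comp_const_add (-h i) t
      (hxc.integral_hasStrictDerivAt (-h i) (-h i + t)).hasDerivAt
  have hterm (i : ι) : HasDerivAt (fun s => A i (∫ r in (-h i)..(-h i + s), x r))
      (A i (x (t - h i))) t :=
    ((A i).restrictScalars ℝ).hasFDerivAt.comp_hasDerivAt t (hprim i)
  refine ((HasDerivAt.fun_sum fun i _ => hterm i).const_add (x 0)).congr_of_eventuallyEq ?_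
  filter_upwards [Icc_mem_nhds ht.1 ht.2] with s hs using hx s hs

theorem eq_zero_of_pastOperator_eq_smul [CompleteSpace E] {A : ι → E →L[ℂ] E} {h : ι → ℝ}
    (hL : 0 < L) (hh : ∀ i, h i ∈ Icc 0 L)
    (hinj : ∀ z : ℂ, 0 ≤ z.re → Function.Injective (characteristicOperator A h z))
    {μ : ℂ} (hμ : 1 ≤ ‖μ‖) {y : C(Icc (0 : ℝ) L, E)}
    (hy : pastOperator A h hL.le y = μ • (y - delayIntegral A h hL.le 0 y)) : y = 0 := by
  have hμ0 : μ ≠ 0 := norm_pos_iff.1 (one_pos.trans_le hμ)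
  have hL0 : (L : ℂ) ≠ 0 := by exact_mod_cast hL.ne'
  have hexp : Complex.exp (Complex.log μ / L * L) = μ := by
    rw [div_mul_cancel₀ _ hL0, Complex.exp_log hμ0]
  have hre : 0 ≤ (Complex.log μ / L).re := by
    rw [Complex.div_ofReal_re, Complex.log_re]
    exact div_nonneg (Real.log_nonneg hμ) hL.le
  have hend : y ⟨L, hL.le, le_rfl⟩ =
      Complex.exp (Complex.log μ / L * L) • y ⟨0, le_rfl, hL.le⟩ := by
    simpa [pastOperator_apply, delayIntegral_apply, windowIntegral_apply, hexp] using
      DFunLike.congr_fun hy ⟨0, le_rfl, hL.le⟩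
  obtain ⟨x, hper, rfl⟩ := exists_periodic_expTwist_window_eq hL hend
  have hprev : window L x (0 - L) = μ⁻¹ • window L x 0 := by
    ext s
    have hs := sub_period_of_periodic_expTwist hper s
    rw [Complex.exp_neg, hexp] at hs
    simpa [window, neg_add_eq_sub] using hs
  have hwindow : window L x 0 =
      pastOperator A h hL.le (window L x (0 - L)) + delayIntegral A h hL.le 0 (window L x 0) := by
    rw [hprev, map_smul, hy, inv_smul_smul₀ hμ0, sub_add_cancel]
  have hx (s) (hs : s ∈ Icc 0 L) : x s = x 0 + ∑ i, A i (∫ r in (-h i)..(-h i + s), x r) := by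
    have hval := DFunLike.congr_fun hwindow ⟨s, hs⟩
    rw [ContinuousMap.add_apply, pastOperator_window_add_delayIntegral_window hL.le hh] at hval
    simpa [window] using hval
  have hx0 : (x : ℝ → E) = 0 := eq_zero_of_periodic_expTwist hinj hre hL x.continuous hper
    fun t ht => hasDerivAt_of_integral_equation x.continuous hx ht
  ext s
  simp [window, hx0]

theorem monodromy_eigenvector_eq_zero [ProperSpace E] {A : ι → E →L[ℂ] E} {h : ι → ℝ}
    (hL : 0 < L) (hh : ∀ i, h i ∈ Icc 0 L)
    (hinj : ∀ z : ℂ, 0 ≤ z.re → Function.Injective (characteristicOperator A h z))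
    {μ : ℂ} (hμ : 1 ≤ ‖μ‖) {y : C(Icc (0 : ℝ) L, E)} (hy : monodromy A h hL.le y = μ • y) :
    y = 0 := by
  refine eq_zero_of_pastOperator_eq_smul hL hh hinj hμ ?_
  have hunit := isUnit_one_sub_delayIntegral_zero (A := A) hL.le fun i => (hh i).1
  calc pastOperator A h hL.le y
      = ((1 - delayIntegral A h hL.le 0) * monodromy A h hL.le) y := by
        rw [monodromy, ← mul_assoc, Ring.mul_inverse_cancel _ hunit, one_mul]
    _ = μ • (y - delayIntegral A h hL.le 0 y) := by simp [hy, smul_sub]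

theorem summable_norm_monodromy_pow [ProperSpace E] {A : ι → E →L[ℂ] E} {h : ι → ℝ}
    (hL : 0 < L) (hh : ∀ i, h i ∈ Icc 0 L)
    (hinj : ∀ z : ℂ, 0 ≤ z.re → Function.Injective (characteristicOperator A h z)) :
    Summable fun j : ℕ => ‖monodromy A h hL.le ^ j‖ := by
  refine summable_norm_pow_of_spectralRadius_lt_one (a := monodromy A h hL.le) ?_
  exact spectralRadius_lt_one_of_isCompactOperator (isCompactOperator_monodromy A h hL.le)
    fun _ _ hμ hy => monodromy_eigenvector_eq_zero hL hh hinj hμ hy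

end Monodromy

section Perturbation

variable {L : ℝ}

theorem eq_add_integral_of_hasDerivAt [CompleteSpace E] {A : ι → E →L[ℂ] E} {h : ι → ℝ}
    {x F : ℝ → E} (hxc : Continuous x) (hFc : Continuous F) {t s : ℝ} (hs : 0 ≤ s)
    (hx : ∀ r > t, HasDerivAt x ((∑ i, A i (x (r - h i))) + F r) r) :
    x (t + s) = x t + ∑ i, A i (∫ r in (t - h i)..(t - h i + s), x r) + ∫ r in t..(t + s), F r := by
  have hxi (i : ι) : Continuous fun r => x (r - h i) := by fun_prop
  have hAi (i : ι) : Continuous fun r => A i (x (r - h i)) := by fun_prop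
  have hftc := intervalIntegral.integral_eq_sub_of_hasDerivAt_of_le (le_add_of_nonneg_right hs)
    hxc.continuousOn (fun r hr => hx r hr.1) (Continuous.intervalIntegrable (by fun_prop) _ _)
  have hdelay (i : ι) : ∫ r in t..(t + s), A i (x (r - h i)) =
      A i (∫ r in (t - h i)..(t - h i + s), x r) := by
    rw [(A i).intervalIntegral_comp_comm ((hxi i).intervalIntegrable _ _),
      intervalIntegral.integral_comp_sub_right x, add_sub_right_comm]
  rw [intervalIntegral.integral_add (Continuous.intervalIntegrable (by fun_prop) _ _)
      (hFc.intervalIntegrable _ _),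
    intervalIntegral.integral_finsetSum fun i _ => (hAi i).intervalIntegrable _ _] at hftc
  simp only [hdelay] at hftc
  rw [add_assoc, hftc, add_sub_cancel]

theorem one_sub_delayIntegral_window [CompleteSpace E] {A : ι → E →L[ℂ] E} {h : ι → ℝ}
    (hL : 0 ≤ L) (hh : ∀ i, h i ∈ Icc 0 L) {x F : C(ℝ, E)} {t : ℝ}
    (hx : ∀ r > t, HasDerivAt x ((∑ i, A i (x (r - h i))) + F r) r) :
    (1 - delayIntegral A h hL 0) (window L x t) =
      pastOperator A h hL (window L x (t - L)) + windowIntegral hL 0 (window L F t) := by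
  rw [sub_apply, one_apply_eq_self, sub_eq_iff_eq_add]
  ext s
  have hF : windowIntegral hL 0 (window L F t) s = ∫ r in t..(t + s), F r := by
    simp [windowIntegral_window]
  rw [ContinuousMap.add_apply, ContinuousMap.add_apply, hF, add_right_comm,
    pastOperator_window_add_delayIntegral_window hL hh]
  exact eq_add_integral_of_hasDerivAt x.continuous F.continuous s.2.1 hx

theorem norm_window_sub_monodromy_le [ProperSpace E] {A : ι → E →L[ℂ] E} {h : ι → ℝ}
    (hL : 0 ≤ L) (hh : ∀ i, h i ∈ Icc 0 L) {x F : C(ℝ, E)} {t : ℝ}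
    (hx : ∀ r > t, HasDerivAt x ((∑ i, A i (x (r - h i))) + F r) r) :
    ‖window L x t - monodromy A h hL (window L x (t - L))‖ ≤
      ‖Ring.inverse (1 - delayIntegral A h hL 0) ∘L windowIntegral hL 0‖ * ‖window L F t‖ := by
  have hunit := isUnit_one_sub_delayIntegral_zero (A := A) hL fun i => (hh i).1
  have hwindow : window L x t = monodromy A h hL (window L x (t - L)) +
      (Ring.inverse (1 - delayIntegral A h hL 0) ∘L windowIntegral hL 0) (window L F t) :=
    calc window L x t
        = Ring.inverse (1 - delayIntegral A h hL 0)
            ((1 - delayIntegral A h hL 0) (window L x t)) := by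
          rw [← mul_apply_eq_comp, Ring.inverse_mul_cancel _ hunit, one_apply_eq_self]
      _ = monodromy A h hL (window L x (t - L)) +
          (Ring.inverse (1 - delayIntegral A h hL 0) ∘L windowIntegral hL 0) (window L F t) := by
          rw [one_sub_delayIntegral_window hL hh hx, map_add]
          rfl
  rw [sub_eq_iff_eq_add'.2 hwindow]
  exact ContinuousLinearMap.le_opNorm _ _

theorem exists_pos_forall_bounded_of_norm_le_mul_historyNorm [ProperSpace E]
    {A : ι → E →L[ℂ] E} {h : ι → ℝ} {H : ℝ} (hH : 0 ≤ H) (hh : ∀ i, h i ∈ Icc 0 H)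
    (hinj : ∀ z : ℂ, 0 ≤ z.re → Function.Injective (characteristicOperator A h z)) :
    ∃ δ > 0, ∀ (F x : C(ℝ, E)) (K₀ : ℝ), 0 ≤ K₀ →
      (∀ t > 0, HasDerivAt x ((∑ i, A i (x (t - h i))) + F t) t) →
      (∀ᶠ t in atTop, ‖F t‖ ≤ δ * historyNorm H x t + K₀) →
      ∃ B t₀, ∀ t ≥ t₀, ‖x t‖ ≤ B := by
  obtain ⟨L, hHL⟩ := exists_gt H
  have hL : 0 < L := hH.trans_lt hHL
  have hhL (i : ι) : h i ∈ Icc 0 L := ⟨(hh i).1, (hh i).2.trans hHL.le⟩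
  have hM := summable_norm_monodromy_pow hL hhL hinj
  set M := monodromy A h hL.le
  set S := ∑' j : ℕ, ‖M ^ j‖
  set K := ‖Ring.inverse (1 - delayIntegral A h hL.le 0) ∘L windowIntegral hL.le 0‖
  have hS : 0 ≤ S := tsum_nonneg fun j => norm_nonneg (M ^ j)
  have hK : 0 ≤ K := ContinuousLinearMap.opNorm_nonneg _
  have hSK : 0 < 2 * S * K + 1 :=
    add_pos_of_nonneg_of_pos (mul_nonneg (mul_nonneg two_pos.le hS) hK) one_pos
  refine ⟨(2 * S * K + 1)⁻¹, inv_pos.2 hSK, fun F x K₀ hK₀ hx hF => ?_⟩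
  set δ := (2 * S * K + 1)⁻¹
  have hδ : 0 ≤ δ := (inv_pos.2 hSK).le
  have hsmall : 2 * (S * (K * δ)) ≤ 1 := by linarith [mul_inv_cancel₀ hSK.ne']
  obtain ⟨t₀, ht₀⟩ := eventually_atTop.1 (hF.and (eventually_ge_atTop 0))
  have hstep (k : ℕ) : ‖window L x (t₀ + (k + 1 : ℕ) * L) - M (window L x (t₀ + k * L))‖ ≤
      K * δ * max ‖window L x (t₀ + k * L)‖ ‖window L x (t₀ + (k + 1 : ℕ) * L)‖ + K * K₀ := by
    have ht : t₀ ≤ t₀ + (k + 1 : ℕ) * L := le_add_of_nonneg_right (by positivity)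
    have hprev : t₀ + k * L = t₀ + (k + 1 : ℕ) * L - L := by
      push_cast
      ring
    have hforcing := norm_window_le_mul_max_norm_window hHL.le hδ hK₀
      fun r hr => (ht₀ r (ht.trans hr)).1
    rw [hprev, mul_assoc, ← mul_add]
    exact (norm_window_sub_monodromy_le hL.le hhL fun r hr =>
      hx r ((ht₀ _ ht).2.trans_lt hr)).trans (by gcongr)
  exact ⟨_, t₀, fun t ht => norm_le_of_norm_window_le hL
    (norm_perturbed_orbit_le hM (mul_nonneg hK hδ) (mul_nonneg hK hK₀) hsmall hstep) ht⟩

end Perturbation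

end DelayEquation

theorem exists_continuousMap_eqOn_Ici {X : Type*} [TopologicalSpace X] {f : ℝ → X} {a : ℝ}
    (hf : ContinuousOn f (Set.Ici a)) : ∃ g : C(ℝ, X), Set.EqOn g f (Set.Ici a) := by
  refine ⟨⟨fun t => f (max a t), hf.comp_continuous (by fun_prop) fun t => le_max_left a t⟩, ?_⟩
  intro t ht
  simp [max_eq_right (Set.mem_Ici.1 ht)]

theorem stmt7_general {E ι : Type*} [NormedAddCommGroup E] [NormedSpace ℂ E]
    [FiniteDimensional ℂ E] [Fintype ι] (A : ι → E →L[ℂ] E) (h : ι → ℝ) (H : ℝ) (hH : 0 ≤ H)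
    (hh : ∀ i, h i ∈ Set.Icc 0 H)
    (hinj : ∀ z : ℂ, 0 ≤ z.re →
      Function.Injective (DelayEquation.characteristicOperator A h z)) :
    ∃ δ > 0, ∀ (F x : ℝ → E) (K₀ : ℝ), 0 ≤ K₀ → ContinuousOn F (Set.Ici 0) →
      ContinuousOn x (Set.Ici (-H)) →
      (∀ t > 0, HasDerivAt x ((∑ i, A i (x (t - h i))) + F t) t) →
      (∀ᶠ t in atTop, ‖F t‖ ≤ δ * DelayEquation.historyNorm H x t + K₀) →
      ∃ B, ∀ t, -H ≤ t → ‖x t‖ ≤ B := by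
  have := FiniteDimensional.proper_rclike ℂ E
  obtain ⟨δ, hδ, hbound⟩ :=
    DelayEquation.exists_pos_forall_bounded_of_norm_le_mul_historyNorm hH hh hinj
  refine ⟨δ, hδ, fun F x K₀ hK₀ hFc hxc hx hF => ?_⟩
  obtain ⟨G, hG⟩ := exists_continuousMap_eqOn_Ici hFc
  obtain ⟨y, hy⟩ := exists_continuousMap_eqOn_Ici hxc
  have hderiv (t) (ht : t > 0) : HasDerivAt y ((∑ i, A i (y (t - h i))) + G t) t := by
    have hpast (i : ι) : y (t - h i) = x (t - h i) := hy (by simpa using by linarith [(hh i).2])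
    simp only [hpast, hG (Set.mem_Ici.2 ht.le)]
    exact (hx t ht).congr_of_eventuallyEq (hy.eventuallyEq_of_mem (Ici_mem_nhds (by linarith)))
  have hforcing : ∀ᶠ t in atTop, ‖G t‖ ≤ δ * DelayEquation.historyNorm H y t + K₀ := by
    filter_upwards [hF, eventually_ge_atTop 0] with t ht ht0
    have hhist : DelayEquation.historyNorm H y t = DelayEquation.historyNorm H x t :=
      congrArg sSup (Set.image_congr fun τ hτ => by rw [hy (by simpa using by linarith [hτ.1])])
    rwa [hG ht0, hhist]
  obtain ⟨B, t₀, hB⟩ := hbound G y K₀ hK₀ hderiv hforcing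
  obtain ⟨C, hC⟩ := isCompact_Icc.exists_bound_of_continuousOn
    (y.continuous.continuousOn (s := Set.Icc (-H) t₀))
  refine ⟨max B C, fun t ht => ?_⟩
  rw [← hy ht]
  rcases le_total t₀ t with ht₀ | ht₀
  · exact (hB t ht₀).trans (le_max_left B C)
  · exact (hC t ⟨ht, ht₀⟩).trans (le_max_right B C)

theorem characteristicOperator_toEuclideanCLM {n : ℕ} {ι : Type*} [Fintype ι]
    (A : ι → Matrix (Fin n) (Fin n) ℂ) (h : ι → ℝ) (z : ℂ) :
    DelayEquation.characteristicOperator (fun i => Matrix.toEuclideanCLM (𝕜 := ℂ) (A i)) h z =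
      Matrix.toEuclideanCLM (𝕜 := ℂ) (z • 1 - ∑ i, Complex.exp (-(h i : ℂ) * z) • A i) := by
  simp only [DelayEquation.characteristicOperator, map_sub, map_smul, map_one, map_sum]

theorem injective_characteristicOperator_of_charFn_ne_zero {n m : ℕ}
    {A : Fin (m + 1) → Matrix (Fin n) (Fin n) ℂ} {hd : Fin (m + 1) → ℝ} {z : ℂ}
    (hz : charFn A hd z ≠ 0) : Function.Injective (DelayEquation.characteristicOperator
      (fun i => Matrix.toEuclideanCLM (𝕜 := ℂ) (A i)) hd z) := by
  rw [characteristicOperator_toEuclideanCLM]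
  have hunit := ((Matrix.isUnit_iff_isUnit_det _).2 (isUnit_iff_ne_zero.2 hz)).map
    (Matrix.toEuclideanCLM (n := Fin n) (𝕜 := ℂ))
  exact (ContinuousLinearMap.isUnit_iff_bijective.1 hunit).1

theorem tendsto_zero_of_tendsto_exp_mul {γ : ℝ → ℝ} {a : ℝ} (ha : 0 ≤ a)
    (hγ : Tendsto (fun t => Real.exp (a * t) * γ t) atTop (nhds 0)) :
    Tendsto γ atTop (nhds 0) := by
  refine squeeze_zero_norm' ?_ (tendsto_zero_iff_norm_tendsto_zero.1 hγ)
  filter_upwards [eventually_ge_atTop 0] with t ht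
  rw [norm_mul, Real.norm_of_nonneg (Real.exp_pos _).le]
  exact le_mul_of_one_le_left (norm_nonneg _) (Real.one_le_exp (mul_nonneg ha ht))

/-- **Corollary 3.5** (uniform boundedness): if all characteristic zeros have real
part `≤ -ρ < 0` and `‖F(t)‖ ≤ γ(t) ‖x_t‖ + K₀` with `e^{a t} γ(t) → 0` for some
`a > 0`, then the solution is uniformly bounded on `[-h, ∞)`. -/
theorem stmt7 {n m : ℕ} (hn : 1 ≤ n) (hm : 1 ≤ m)
    (A : Fin (m + 1) → Matrix (Fin n) (Fin n) ℂ)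
    (hd : Fin (m + 1) → ℝ) (hd0 : hd 0 = 0) (hdnn : ∀ i, 0 ≤ hd i)
    (H : ℝ) (hH : IsGreatest (Set.range hd) H)
    (ρ : ℝ) (hρ : 0 < ρ)
    (hneg : ∀ z : ℂ, charFn A hd z = 0 → z.re ≤ -ρ)
    (F : ℝ → EuclideanSpace ℂ (Fin n)) (hFc : ContinuousOn F (Set.Ici 0))
    (x : ℝ → EuclideanSpace ℂ (Fin n)) (hxc : ContinuousOn x (Set.Ici (-H)))
    (hx : ∀ t > 0, HasDerivAt x ((∑ i, mulVecE (A i) (x (t - hd i))) + F t) t)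
    (γ : ℝ → ℝ) (hγc : ContinuousOn γ (Set.Ici 0)) (hγnn : ∀ t, 0 ≤ t → 0 ≤ γ t)
    (K₀ : ℝ) (hK₀ : 0 ≤ K₀)
    (hFb : ∀ t, 0 ≤ t → ‖F t‖ ≤ γ t * slidingSup H x t + K₀)
    (a : ℝ) (ha : 0 < a)
    (hγdec : Tendsto (fun t => Real.exp (a * t) * γ t) atTop (nhds 0)) :
    ∃ B : ℝ, ∀ t, -H ≤ t → ‖x t‖ ≤ B := by
  have hdelay (i) : hd i ∈ Set.Icc 0 H := ⟨hdnn i, hH.2 (Set.mem_range_self i)⟩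
  obtain ⟨δ, hδ, hbound⟩ := stmt7_general (fun i => Matrix.toEuclideanCLM (𝕜 := ℂ) (A i)) hd H
    ((hdelay 0).1.trans (hdelay 0).2) hdelay
    fun z hz => injective_characteristicOperator_of_charFn_ne_zero fun h0 => by linarith [hneg z h0]
  refine hbound F x K₀ hK₀ hFc hxc hx ?_
  filter_upwards [(tendsto_zero_of_tendsto_exp_mul ha.le hγdec).eventually_le_const hδ,
    eventually_ge_atTop 0] with t hγt ht
  calc ‖F t‖ ≤ γ t * DelayEquation.historyNorm H x t + K₀ := hFb t ht
    _ ≤ δ * DelayEquation.historyNorm H x t + K₀ := by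
      gcongr
      exact DelayEquation.historyNorm_nonneg H x t
end
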